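/- arXiv:1005.1306 — 2 statements merged into one kernel-verified Lean document; each statement's English description precedes it below -/
import Mathlib

section
/- There exists a universal constant C > 0 such that the following holds. For all positive integers n and j, let M be distributed according to the Haar probability measure on SO(n,ℝ), and set W = Tr(M^j)/√j if j is odd and W = (Tr(M^j) − 1)/√j if j is even. Then for every real x₀, |P(W ≤ x₀) − Φ(x₀)| ≤ C·j/n. -/
open MeasureTheory ProbabilityTheory Matrix

/-- Matrices over a measurable space of entries carry the product σ-algebra
(the Borel σ-algebra, for matrices over `ℝ` or `ℂ`). -/
instance matrixMeasurableSpace {m n α : Type*} [MeasurableSpace α] :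
    MeasurableSpace (Matrix m n α) :=
  inferInstanceAs (MeasurableSpace (m → n → α))

/-- The special orthogonal group `SO(n,ℝ)`: real orthogonal `n × n` matrices of
determinant `1`, as a subgroup of the orthogonal group. -/
def SO (n : ℕ) : Subgroup (Matrix.orthogonalGroup (Fin n) ℝ) where
  carrier := {M | Matrix.det (M : Matrix (Fin n) (Fin n) ℝ) = 1}
  mul_mem' := by
    intro a b ha hb
    simp only [Set.mem_setOf_eq, Matrix.UnitaryGroup.mul_val, Matrix.det_mul] at *
    rw [ha, hb, mul_one]
  one_mem' := by
    simp only [Set.mem_setOf_eq, Matrix.UnitaryGroup.one_val, Matrix.det_one]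
  inv_mem' := by
    intro a ha
    simp only [Set.mem_setOf_eq, Matrix.UnitaryGroup.inv_val] at *
    rw [Matrix.star_eq_conjTranspose, Matrix.det_conjTranspose, ha, star_one]

/-- The trace of the `k`-th power (`k : ℤ`, negative powers via the inverse) of an
element of `SO(n,ℝ)`. -/
noncomputable def trSO {n : ℕ} (M : SO n) (k : ℤ) : ℝ :=
  Matrix.trace (((M ^ k : SO n) : Matrix.orthogonalGroup (Fin n) ℝ) :
    Matrix (Fin n) (Fin n) ℝ)

/-- The standard normal cumulative distribution function
`Φ(x₀) = (1/√(2π)) ∫_{-∞}^{x₀} e^{-x²/2} dx`. -/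
noncomputable def Phi (x₀ : ℝ) : ℝ :=
  (Real.sqrt (2 * Real.pi))⁻¹ * ∫ x in Set.Iic x₀, Real.exp (-x ^ 2 / 2)

/-!
Write `p_k = Tr (M ^ k)`. Integration by parts along the one-parameter subgroups of `SO(n,ℝ)` is
Green's formula `E[ψ Δp_j + ⟨∇ψ, ∇p_j⟩] = 0`, where
`Δp_j = j ∑_{i < j} (p_{|j - 2i|} - p_i p_{j - i})`, `⟨∇p_j, ∇p_b⟩ = j b (p_{|j - b|} - p_{j + b})`
and `p_0 = n`, so that `Δp_j ≈ -n j (p_j - η_j)` with `η_j = 1` for even `j` and `0` for odd `j`.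

Applied to monomials `ψ` in the power sums, this formula shows that the defect `E[T_a ψ]` in the
Gaussian integration by parts `T_a ψ = (p_a - η_a) ψ - a ∂ψ/∂p_a`, times `n - 1`, is a combination
of defects of the same weight `D = a + wt ψ` with coefficients of total size `D - 1`. For `D < n`
the largest defect of weight `D` must therefore vanish: moments of low weight are exactly those of
independent Gaussian variables with mean `η_k` and variance `k`.

These moments control the `L²` norm of the error in `Δp_j ≈ -n j (p_j - η_j)`, and Green's formula
for `ψ = g(W)` turns this into a bound for `E[g'(W) - W g(W)]`, that is, into Stein's method.
-/

open Filter Topology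

section CompactGroup

lemma hasDerivAt_mul_left_of_hasDerivAt_zero {G : Type*} [Group G] {γ : ℝ → G}
    (hγ : ∀ s t, γ (s + t) = γ s * γ t) {F F' : G → ℝ}
    (h : ∀ g, HasDerivAt (fun t ↦ F (γ t * g)) (F' g) 0) (g : G) (t : ℝ) :
    HasDerivAt (fun s ↦ F (γ s * g)) (F' (γ t * g)) t := by
  have hshift : HasDerivAt (fun s ↦ F (γ (s - t) * (γ t * g))) (F' (γ t * g)) t :=
    HasDerivAt.comp_sub_const t t (by simpa using h (γ t * g))
  simpa [← mul_assoc, ← hγ] using hshift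

variable {G : Type*} [TopologicalSpace G] [CompactSpace G] [MeasurableSpace G] [BorelSpace G]
  {μ : Measure G} [IsFiniteMeasure μ]

lemma integrable_of_continuous {f : G → ℝ} (hf : Continuous f) : Integrable f μ :=
  hf.integrable_of_hasCompactSupport (HasCompactSupport.of_compactSpace f)

lemma memLp_of_continuous {f : G → ℝ} (hf : Continuous f) {p : ENNReal} : MemLp f p μ :=
  hf.memLp_of_hasCompactSupport (HasCompactSupport.of_compactSpace f)

/- The integral of `F (γ t * g)` over `g` does not depend on `t`, by left invariance. -/
theorem integral_eq_zero_of_hasDerivAt_mul_left [Group G] [ContinuousMul G]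
    [μ.IsMulLeftInvariant] {γ : ℝ → G} (hγ : ∀ s t, γ (s + t) = γ s * γ t) {F F' : G → ℝ}
    (hF : Continuous F) (hF' : Continuous F')
    (h : ∀ g, HasDerivAt (fun t ↦ F (γ t * g)) (F' g) 0) : ∫ g, F' g ∂μ = 0 := by
  obtain ⟨B, hB⟩ := (isCompact_range hF').isBounded.exists_norm_le
  have htranslate : ∀ t, Continuous (γ t * · : G → G) := fun t ↦ continuous_const_mul (γ t)
  have hderiv := (hasDerivAt_integral_of_dominated_loc_of_deriv_le (μ := μ) (𝕜 := ℝ) (x₀ := 0)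
    (bound := fun _ ↦ B) (F := fun t g ↦ F (γ t * g)) (F' := fun t g ↦ F' (γ t * g)) univ_mem
    (.of_forall fun t ↦ (hF.comp (htranslate t)).aestronglyMeasurable)
    (integrable_of_continuous (hF.comp (htranslate 0)))
    (hF'.comp (htranslate 0)).aestronglyMeasurable
    (.of_forall fun g t _ ↦ hB _ (Set.mem_range_self _)) (integrable_const _)
    (.of_forall fun g t _ ↦ hasDerivAt_mul_left_of_hasDerivAt_zero hγ h g t)).2
  simp only [integral_mul_left_eq_self F, integral_mul_left_eq_self F'] at hderiv
  exact hderiv.unique (hasDerivAt_const _ _)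

end CompactGroup

section OrthogonalMatrices

theorem isCompact_unitaryGroup {ι 𝕜 : Type*} [Fintype ι] [DecidableEq ι] [RCLike 𝕜] :
    IsCompact (Matrix.unitaryGroup ι 𝕜 : Set (Matrix ι ι 𝕜)) := by
  have hbox : IsCompact {A : Matrix ι ι 𝕜 | ∀ i j, A i j ∈ Metric.closedBall (0 : 𝕜) 1} :=
    isCompact_pi_infinite fun _ ↦ isCompact_pi_infinite fun _ ↦ isCompact_closedBall 0 1
  refine hbox.of_isClosed_subset isClosed_unitary fun U hU i j ↦ ?_
  simpa using entry_norm_bound_of_unitary hU i j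

open scoped Matrix.Norms.L2Operator

lemma exp_mem_orthogonalGroup {ι : Type*} [Fintype ι] [DecidableEq ι] {X : Matrix ι ι ℝ}
    (hX : X ∈ skewAdjoint (Matrix ι ι ℝ)) :
    NormedSpace.exp X ∈ Matrix.orthogonalGroup ι ℝ :=
  let : NormedAlgebra ℚ (Matrix ι ι ℝ) := .restrictScalars ℚ ℝ _
  NormedSpace.exp_mem_unitary_of_mem_skewAdjoint hX

/- `exp X` is the square of the orthogonal matrix `exp (X / 2)`. -/
lemma det_exp_eq_one_of_mem_skewAdjoint {ι : Type*} [Fintype ι] [DecidableEq ι]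
    {X : Matrix ι ι ℝ} (hX : X ∈ skewAdjoint (Matrix ι ι ℝ)) : (NormedSpace.exp X).det = 1 := by
  set Y := NormedSpace.exp ((2⁻¹ : ℝ) • X)
  have hY : Y ∈ Matrix.orthogonalGroup ι ℝ :=
    exp_mem_orthogonalGroup (skewAdjoint.smul_mem _ hX)
  have hsq : NormedSpace.exp X = Y * Y := by
    rw [← Matrix.exp_add_of_commute _ _ rfl, ← add_smul]
    norm_num
  calc (NormedSpace.exp X).det = (Y * star Y).det := by
        simp [hsq, star_eq_conjTranspose]
    _ = 1 := by rw [Unitary.mul_star_self_of_mem hY, det_one]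

end OrthogonalMatrices

namespace SO

variable {n : ℕ}

instance : BorelSpace (Matrix (Fin n) (Fin n) ℝ) :=
  inferInstanceAs (BorelSpace (Fin n → Fin n → ℝ))

instance : BorelSpace (Matrix.orthogonalGroup (Fin n) ℝ) :=
  inferInstanceAs (BorelSpace {A // A ∈ Matrix.orthogonalGroup (Fin n) ℝ})

instance : BorelSpace (SO n) :=
  inferInstanceAs (BorelSpace {A // A ∈ SO n})

instance : CompactSpace (Matrix.orthogonalGroup (Fin n) ℝ) :=
  isCompact_iff_compactSpace.1 isCompact_unitaryGroup

instance : CompactSpace (SO n) := by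
  have hclosed : IsClosed (SO n : Set (Matrix.orthogonalGroup (Fin n) ℝ)) :=
    isClosed_eq continuous_subtype_val.matrix_det continuous_const
  exact isCompact_iff_compactSpace.1 hclosed.isCompact

/-- The inclusion of `SO(n,ℝ)` in the ring of matrices. -/
def toMatrix : SO n →* Matrix (Fin n) (Fin n) ℝ :=
  (Matrix.orthogonalGroup (Fin n) ℝ).subtype.comp (SO n).subtype

@[fun_prop]
lemma continuous_toMatrix : Continuous (toMatrix : SO n → Matrix (Fin n) (Fin n) ℝ) :=
  continuous_subtype_val.comp continuous_subtype_val

lemma transpose_toMatrix_mul_toMatrix (M : SO n) : (toMatrix M)ᵀ * toMatrix M = 1 :=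
  Unitary.star_mul_self_of_mem M.1.2

end SO

namespace SO

variable {n : ℕ}

section Flow

open scoped Matrix.Norms.L2Operator

variable (X : skewAdjoint (Matrix (Fin n) (Fin n) ℝ))

/-- The exponential map from skew-symmetric matrices, the Lie algebra of `SO(n,ℝ)`, to the group. -/
noncomputable def expSkew : SO n :=
  ⟨⟨NormedSpace.exp X, exp_mem_orthogonalGroup X.2⟩, det_exp_eq_one_of_mem_skewAdjoint X.2⟩

lemma expSkew_zero : expSkew (0 : skewAdjoint (Matrix (Fin n) (Fin n) ℝ)) = 1 := by
  apply Subtype.ext; apply Subtype.ext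
  exact NormedSpace.exp_zero

lemma expSkew_add_smul (s t : ℝ) :
    expSkew ((s + t) • X) = expSkew (s • X) * expSkew (t • X) := by
  apply Subtype.ext; apply Subtype.ext
  change NormedSpace.exp ((s + t) • (X : Matrix (Fin n) (Fin n) ℝ)) =
    NormedSpace.exp (s • (X : Matrix (Fin n) (Fin n) ℝ)) * NormedSpace.exp (t • _)
  rw [add_smul]
  exact Matrix.exp_add_of_commute _ _ (((Commute.refl _).smul_left s).smul_right t)

/-- `F'` is the Lie derivative of `F` along the right-invariant vector field `M ↦ X * M`. -/
def HasLieDeriv (F F' : SO n → ℝ) : Prop :=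
  ∀ M, HasDerivAt (fun t : ℝ ↦ F (expSkew (t • X) * M)) (F' M) 0

variable {X} in
lemma HasLieDeriv.mul {F F' H H' : SO n → ℝ} (hF : HasLieDeriv X F F') (hH : HasLieDeriv X H H') :
    HasLieDeriv X (fun M ↦ F M * H M) (fun M ↦ F' M * H M + F M * H' M) := fun M ↦
  ((hF M).mul (hH M)).congr_deriv (by simp [expSkew_zero])

variable {X} in
lemma HasLieDeriv.integral_eq_zero {μ : Measure (SO n)} [IsFiniteMeasure μ]
    [μ.IsMulLeftInvariant] {F F' : SO n → ℝ}
    (h : HasLieDeriv X F F') (hF : Continuous F) (hF' : Continuous F') : ∫ M, F' M ∂μ = 0 :=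
  integral_eq_zero_of_hasDerivAt_mul_left (expSkew_add_smul X) hF hF' h

lemma hasDerivAt_toMatrix_expSkew_mul (M : SO n) :
    HasDerivAt (fun t : ℝ ↦ toMatrix (expSkew (t • X) * M)) (X * toMatrix M) 0 := by
  refine ((hasDerivAt_exp_smul_const' (𝕂 := ℝ) (X : Matrix (Fin n) (Fin n) ℝ) 0).mul_const
    (toMatrix M)).congr_deriv ?_
  simp

lemma hasDerivAt_toMatrix_expSkew_mul_pow (M : SO n) (j : ℕ) :
    HasDerivAt (fun t : ℝ ↦ toMatrix (expSkew (t • X) * M) ^ j)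
      (∑ i ∈ Finset.range j, toMatrix M ^ i * X * toMatrix M ^ (j - i)) 0 := by
  induction j with
  | zero => exact hasDerivAt_const (0 : ℝ) (1 : Matrix (Fin n) (Fin n) ℝ)
  | succ j ih =>
    simp only [pow_succ]
    refine (ih.mul (hasDerivAt_toMatrix_expSkew_mul X M)).congr_deriv ?_
    rw [zero_smul, expSkew_zero, one_mul, Finset.sum_mul, Finset.sum_range_succ]
    congr 1
    · refine Finset.sum_congr rfl fun i hi ↦ ?_
      rw [Nat.succ_sub (Finset.mem_range.1 hi).le, pow_succ, mul_assoc _ _ (toMatrix M)]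
    · simp [mul_assoc]

lemma hasLieDeriv_trace_mul_pow (A : Matrix (Fin n) (Fin n) ℝ) (j : ℕ) :
    HasLieDeriv X (fun M ↦ trace (A * toMatrix M ^ j))
      (fun M ↦ ∑ i ∈ Finset.range j,
        trace (A * (toMatrix M ^ i * X.1 * toMatrix M ^ (j - i)))) := by
  intro M
  have htrace := (traceLinearMap (Fin n) ℝ ℝ).toContinuousLinearMap.hasFDerivAt.comp_hasDerivAt
    (0 : ℝ) ((hasDerivAt_toMatrix_expSkew_mul_pow X M j).const_mul A)
  refine htrace.congr_deriv ?_
  change trace (A * ∑ i ∈ Finset.range j, toMatrix M ^ i * X.1 * toMatrix M ^ (j - i)) = _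
  rw [Finset.mul_sum, trace_sum]

end Flow

section PowerSum

/-- The `k`-th power sum of the eigenvalues. -/
noncomputable def powerSum (M : SO n) (k : ℕ) : ℝ :=
  trSO M k

lemma powerSum_eq_trace (M : SO n) (k : ℕ) : powerSum M k = trace (toMatrix M ^ k) := by
  rw [← map_pow, powerSum, trSO, zpow_natCast]
  rfl

lemma powerSum_zero (M : SO n) : powerSum M 0 = n := by
  simp [powerSum_eq_trace]

@[fun_prop]
lemma continuous_powerSum (k : ℕ) : Continuous fun M : SO n ↦ powerSum M k := by
  simp only [powerSum_eq_trace]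
  exact (continuous_toMatrix.pow k).matrix_trace

lemma trace_transpose_pow_mul_pow (M : SO n) (i k : ℕ) :
    trace ((toMatrix M ^ i)ᵀ * toMatrix M ^ k) = powerSum M (Nat.dist i k) := by
  have hle {i k : ℕ} (h : i ≤ k) : (toMatrix M ^ i)ᵀ * toMatrix M ^ k = toMatrix M ^ (k - i) := by
    rw [← map_pow, ← map_pow, ← map_pow, ← Nat.add_sub_cancel' h, pow_add, map_mul, ← mul_assoc,
      transpose_toMatrix_mul_toMatrix, one_mul, Nat.add_sub_cancel_left]
  rw [powerSum_eq_trace]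
  rcases le_total i k with h | h
  · rw [hle h, Nat.dist_eq_sub_of_le h]
  · rw [← trace_transpose, transpose_mul, transpose_transpose, hle h, Nat.dist_eq_sub_of_le_right h]

lemma hasLieDeriv_powerSum (X : skewAdjoint (Matrix (Fin n) (Fin n) ℝ)) (j : ℕ) :
    HasLieDeriv X (fun M ↦ powerSum M j)
      (fun M ↦ j * trace (X.1 * toMatrix M ^ j)) := by
  intro M
  have h := hasLieDeriv_trace_mul_pow X 1 j M
  simp only [one_mul, ← powerSum_eq_trace] at h
  refine h.congr_deriv ?_
  have hcyclic : ∀ i ∈ Finset.range j, trace (toMatrix M ^ i * X.1 * toMatrix M ^ (j - i)) =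
      trace (X.1 * toMatrix M ^ j) := fun i hi ↦ by
    rw [trace_mul_comm, ← mul_assoc, ← pow_add, Nat.sub_add_cancel (Finset.mem_range.1 hi).le,
      trace_mul_comm]
  simp [Finset.sum_congr rfl hcyclic]

end PowerSum
end SO

section SkewUnit

variable {ι R : Type*} [DecidableEq ι] [CommRing R]

/-- The elementary skew-symmetric matrices `E a b`; summing over all pairs `(a, b)` counts each
element of the basis `{E a b | a < b}` of the skew-symmetric matrices twice, up to sign. -/
def skewUnit (R : Type*) [CommRing R] (a b : ι) : Matrix ι ι R :=
  Matrix.single a b 1 - Matrix.single b a 1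

lemma skewUnit_mem_skewAdjoint (a b : ι) : skewUnit ℝ a b ∈ skewAdjoint (Matrix ι ι ℝ) := by
  simp [skewUnit, skewAdjoint.mem_iff, star_eq_conjTranspose]

variable [Fintype ι]

lemma trace_skewUnit_mul (a b : ι) (A : Matrix ι ι R) :
    trace (skewUnit R a b * A) = A b a - A a b := by
  simp [skewUnit, sub_mul, trace_single_mul]

lemma mul_skewUnit_mul_apply (a b c d : ι) (A B : Matrix ι ι R) :
    (A * skewUnit R a b * B) c d = A c a * B b d - A c b * B a d := by
  have hsingle (x y : ι) : (A * (Matrix.single x y 1 : Matrix ι ι R) * B) c d = A c x * B y d := by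
    rw [mul_assoc, mul_apply, Finset.sum_eq_single x] <;> simp +contextual
  simp only [skewUnit, mul_sub, sub_mul, Matrix.sub_apply, hsingle]

lemma sum_trace_skewUnit_mul_mul_trace_skewUnit_mul (A B : Matrix ι ι R) :
    ∑ a, ∑ b, trace (skewUnit R a b * A) * trace (skewUnit R a b * B) =
      2 * (trace (Aᵀ * B) - trace (A * B)) := by
  have hexpand (a b : ι) : (A b a - A a b) * (B b a - B a b) =
      A b a * B b a + A a b * B a b - (A a b * B b a + A b a * B a b) := by ring
  simp only [trace_skewUnit_mul, hexpand, Finset.sum_sub_distrib, Finset.sum_add_distrib]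
  simp only [trace, diag_apply, mul_apply, transpose_apply]
  rw [Finset.sum_comm (f := fun a b ↦ A a b * B a b),
    Finset.sum_comm (f := fun a b ↦ A b a * B a b)]
  ring

lemma sum_trace_skewUnit_mul_mul_skewUnit_mul (A B : Matrix ι ι R) :
    ∑ a, ∑ b, trace (skewUnit R a b * (A * skewUnit R a b * B)) =
      2 * (trace (Aᵀ * B) - trace A * trace B) := by
  have hexpand (a b : ι) : A b a * B b a - A b b * B a a - (A a a * B b b - A a b * B a b) =
      A b a * B b a + A a b * B a b - (A a a * B b b + A b b * B a a) := by ring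
  simp only [trace_skewUnit_mul, mul_skewUnit_mul_apply, hexpand, Finset.sum_sub_distrib,
    Finset.sum_add_distrib]
  simp only [trace, diag_apply, mul_apply, transpose_apply, Finset.sum_mul_sum]
  rw [Finset.sum_comm (f := fun a b ↦ A a b * B a b),
    Finset.sum_comm (f := fun a b ↦ A b b * B a a)]
  ring

end SkewUnit

section PowerSumSequence

variable {R S : Type*} [CommRing R] [CommRing S]

/-- `j * powerSumLaplacian p j` is the Laplacian of the `j`-th power sum on the special orthogonal
group, in terms of the sequence `p` of all power sums. -/
def powerSumLaplacian (p : ℕ → R) (j : ℕ) : R :=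
  ∑ i ∈ Finset.range j, (p (Nat.dist j (2 * i)) - p i * p (j - i))

/-- `j * k * powerSumGradInner p j k` is the inner product of the gradients of the `j`-th and `k`-th
power sums on the special orthogonal group, in terms of the sequence `p` of all power sums. -/
def powerSumGradInner (p : ℕ → R) (j k : ℕ) : R :=
  p (Nat.dist j k) - p (j + k)

lemma map_powerSumLaplacian (f : R →+* S) (p : ℕ → R) (j : ℕ) :
    f (powerSumLaplacian p j) = powerSumLaplacian (fun k ↦ f (p k)) j := by
  simp [powerSumLaplacian]

end PowerSumSequence

namespace SO

variable {n : ℕ}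

lemma sum_trace_skewUnit_mul_pow_mul_trace (M : SO n) (j k : ℕ) :
    ∑ a, ∑ b, trace (skewUnit ℝ a b * toMatrix M ^ j) * trace (skewUnit ℝ a b * toMatrix M ^ k) =
      2 * powerSumGradInner (powerSum M) j k := by
  rw [sum_trace_skewUnit_mul_mul_trace_skewUnit_mul, trace_transpose_pow_mul_pow, ← pow_add,
    ← powerSum_eq_trace, powerSumGradInner]

lemma sum_trace_skewUnit_mul_pow_mul_sum (M : SO n) (j : ℕ) (B : Finset ℕ) (w : ℕ → ℝ) :
    ∑ a, ∑ b, trace (skewUnit ℝ a b * toMatrix M ^ j)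
        * ∑ c ∈ B, c * trace (skewUnit ℝ a b * toMatrix M ^ c) * w c =
      2 * ∑ c ∈ B, c * w c * powerSumGradInner (powerSum M) j c := by
  simp only [Finset.mul_sum, Finset.sum_comm (t := B)]
  refine Finset.sum_congr rfl fun c _ ↦ ?_
  rw [mul_left_comm, ← sum_trace_skewUnit_mul_pow_mul_trace]
  simp only [Finset.mul_sum]
  exact Finset.sum_congr rfl fun a _ ↦ Finset.sum_congr rfl fun b _ ↦ by ring

lemma sum_trace_skewUnit_mul_pow_mul_skewUnit (M : SO n) (j : ℕ) :
    ∑ a, ∑ b, ∑ i ∈ Finset.range j,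
      trace (skewUnit ℝ a b * (toMatrix M ^ i * skewUnit ℝ a b * toMatrix M ^ (j - i))) =
      2 * powerSumLaplacian (powerSum M) j := by
  simp only [Finset.sum_comm (t := Finset.range j), powerSumLaplacian, Finset.mul_sum]
  refine Finset.sum_congr rfl fun i hi ↦ ?_
  have hdist : Nat.dist i (j - i) = Nat.dist j (2 * i) := by
    have := Finset.mem_range.1 hi
    simp only [Nat.dist]
    lia
  rw [sum_trace_skewUnit_mul_mul_skewUnit_mul, trace_transpose_pow_mul_pow, hdist,
    ← powerSum_eq_trace, ← powerSum_eq_trace]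

/-- `ψ` has the derivatives of a function of the power sums with indices in `B` whose partial
derivative in the `b`-th one is `ψ' b`. -/
def HasPowerSumDeriv (B : Finset ℕ) (ψ : SO n → ℝ) (ψ' : ℕ → SO n → ℝ) : Prop :=
  ∀ X : skewAdjoint (Matrix (Fin n) (Fin n) ℝ),
    HasLieDeriv X ψ fun M ↦ ∑ b ∈ B, b * trace (X.1 * toMatrix M ^ b) * ψ' b M

variable {μ : Measure (SO n)} [IsFiniteMeasure μ] [μ.IsMulLeftInvariant]

/- Green's formula `∫ (ψ Δp_j + ⟨∇ψ, ∇p_j⟩) = 0`, divided by `j`. -/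
theorem HasPowerSumDeriv.integral_eq_zero {B : Finset ℕ} {ψ : SO n → ℝ} {ψ' : ℕ → SO n → ℝ}
    (h : HasPowerSumDeriv B ψ ψ') (hψ : Continuous ψ) (hψ' : ∀ b ∈ B, Continuous (ψ' b)) (j : ℕ) :
    ∫ M, (ψ M * powerSumLaplacian (powerSum M) j
      + ∑ b ∈ B, b * ψ' b M * powerSumGradInner (powerSum M) j b) ∂μ = 0 := by
  let E (a b : Fin n) : skewAdjoint (Matrix (Fin n) (Fin n) ℝ) := ⟨_, skewUnit_mem_skewAdjoint a b⟩
  let D (a b : Fin n) (M : SO n) : ℝ :=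
    (∑ i ∈ Finset.range j, trace ((E a b).1 * (toMatrix M ^ i * (E a b).1 * toMatrix M ^ (j - i))))
        * ψ M
      + trace ((E a b).1 * toMatrix M ^ j)
        * ∑ c ∈ B, c * trace ((E a b).1 * toMatrix M ^ c) * ψ' c M
  have hD (a b : Fin n) :
      HasLieDeriv (E a b) (fun M ↦ trace ((E a b).1 * toMatrix M ^ j) * ψ M) (D a b) :=
    (hasLieDeriv_trace_mul_pow (E a b) (E a b).1 j).mul (h (E a b))
  have hD_cont (a b : Fin n) : Continuous (D a b) := by
    fun_prop (disch := assumption)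
  have hD_sum (M : SO n) : ∑ a, ∑ b, D a b M = 2 * (ψ M * powerSumLaplacian (powerSum M) j
      + ∑ b ∈ B, b * ψ' b M * powerSumGradInner (powerSum M) j b) := by
    simp only [D, Finset.sum_add_distrib, ← Finset.sum_mul]
    rw [sum_trace_skewUnit_mul_pow_mul_skewUnit, sum_trace_skewUnit_mul_pow_mul_sum]
    ring
  have hD_int : ∫ M, ∑ a, ∑ b, D a b M ∂μ = 0 := by
    rw [integral_finsetSum _ fun a _ ↦ integrable_of_continuous (by fun_prop)]
    refine Finset.sum_eq_zero fun a _ ↦ ?_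
    rw [integral_finsetSum _ fun b _ ↦ integrable_of_continuous (hD_cont a b)]
    exact Finset.sum_eq_zero fun b _ ↦ (hD a b).integral_eq_zero (by fun_prop) (hD_cont a b)
  simpa [hD_sum, integral_const_mul] using hD_int

end SO

section EvenIndicator

variable {M : Type*} [AddCommMonoid M]

/-- The indicator of the even numbers: the mean of the power sums on the special orthogonal
group. -/
def evenIndicator (k : ℕ) : ℕ := if Even k then 1 else 0

lemma evenIndicator_congr {a b : ℕ} (h : a % 2 = b % 2) : evenIndicator a = evenIndicator b := by
  simp [evenIndicator, Nat.even_iff, h]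

lemma evenIndicator_dist_two_mul (a i : ℕ) :
    evenIndicator (Nat.dist a (2 * i)) = evenIndicator a :=
  evenIndicator_congr (by simp only [Nat.dist]; lia)

lemma evenIndicator_dist (a b : ℕ) : evenIndicator (Nat.dist a b) = evenIndicator (a + b) :=
  evenIndicator_congr (by simp only [Nat.dist]; lia)

lemma sum_range_dist_two_mul (f : ℕ → M) (a : ℕ) :
    ∑ i ∈ Finset.range a, f (Nat.dist a (2 * i)) =
      ∑ i ∈ Finset.range a, (evenIndicator i • f (a - i) + evenIndicator (a - i) • f i) := by
  induction a using Nat.twoStepInduction with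
  | zero => simp
  | one => simp [evenIndicator, Nat.dist]
  | more a ih _ =>
    have hdist : ∑ i ∈ Finset.range a, f (Nat.dist (a + 2) (2 * (i + 1))) =
        ∑ i ∈ Finset.range a, f (Nat.dist a (2 * i)) :=
      Finset.sum_congr rfl fun i _ ↦ by congr 1; simp only [Nat.dist]; lia
    have hleft : ∑ i ∈ Finset.range a, evenIndicator (i + 1 + 1) • f (a + 2 - (i + 1 + 1)) =
        ∑ i ∈ Finset.range a, evenIndicator i • f (a - i) :=
      Finset.sum_congr rfl fun i _ ↦ by
        rw [evenIndicator_congr (show (i + 1 + 1) % 2 = i % 2 by lia)]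
        congr 2; lia
    have hright : ∑ i ∈ Finset.range a, evenIndicator (a + 2 - i) • f i =
        ∑ i ∈ Finset.range a, evenIndicator (a - i) • f i :=
      Finset.sum_congr rfl fun i hi ↦ by
        rw [evenIndicator_congr (a := a + 2 - i) (b := a - i)]
        have := Finset.mem_range.1 hi
        lia
    rw [Finset.sum_range_succ', Finset.sum_range_succ, hdist, ih, Finset.sum_add_distrib,
      Finset.sum_add_distrib, Finset.sum_range_succ' (fun i ↦ evenIndicator i • f (a + 2 - i)),
      Finset.sum_range_succ', Finset.sum_range_succ (fun i ↦ evenIndicator (a + 2 - i) • f i),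
      Finset.sum_range_succ, hleft, hright]
    have hzero : Nat.dist (a + 2) (2 * 0) = a + 2 := by simp [Nat.dist]
    have htwo : Nat.dist (a + 2) (2 * (a + 1)) = a := by simp only [Nat.dist]; lia
    simp only [hzero, htwo, evenIndicator, Nat.add_sub_cancel_left, Nat.sub_zero,
      show a + 2 - (a + 1) = 1 by lia]
    simp [add_assoc, add_comm, add_left_comm]

lemma sum_range_ite_two_mul_eq {a : ℕ} (ha : 0 < a) (f : ℕ → M) :
    (∑ i ∈ Finset.range a, if 2 * i = a then f i else 0) = evenIndicator a • f (a / 2) := by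
  rcases Nat.even_or_odd' a with ⟨m, rfl | rfl⟩
  · rw [Finset.sum_eq_single m (fun i _ hi ↦ if_neg (by lia))
      (fun hm ↦ absurd (Finset.mem_range.2 (by lia)) hm)]
    simp [evenIndicator]
  · rw [Finset.sum_eq_zero fun i _ ↦ if_neg (by lia)]
    simp [evenIndicator]

lemma sum_range_evenIndicator_mul_add_ite (a : ℕ) :
    ∑ i ∈ Finset.range a,
      (evenIndicator i * evenIndicator (a - i) + if 2 * i = a then i else 0) =
      a * evenIndicator a := by
  have hmul := sum_range_dist_two_mul evenIndicator a
  simp only [evenIndicator_dist_two_mul, Finset.sum_const, Finset.card_range, smul_eq_mul,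
    mul_comm (evenIndicator (a - _)), ← two_mul, ← Finset.mul_sum] at hmul
  have hite : 2 * (∑ i ∈ Finset.range a, if 2 * i = a then i else 0) = a * evenIndicator a := by
    rcases Nat.eq_zero_or_pos a with rfl | ha
    · simp
    rw [sum_range_ite_two_mul_eq ha fun i ↦ i]
    rcases Nat.even_or_odd' a with ⟨m, rfl | rfl⟩ <;> simp [evenIndicator]
  rw [Finset.sum_add_distrib]
  lia

end EvenIndicator

section PowerSumPolynomials

open MvPolynomial

variable {R : Type*} [CommRing R]

/-- `Q ↦ ⟨∇Q, ∇p_j⟩ / j` for polynomials `Q` in the power sums `p_k = X k`. -/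
noncomputable def gradPowerSum (j : ℕ) : Derivation R (MvPolynomial ℕ R) (MvPolynomial ℕ R) :=
  mkDerivation R fun b ↦ b • powerSumGradInner X j b

/-- The divergence of `Q ∇p_j`, divided by `j`, for polynomials `Q` in the power sums
`p_k = X k`. -/
noncomputable def divPowerSum (j : ℕ) (Q : MvPolynomial ℕ R) : MvPolynomial ℕ R :=
  Q * powerSumLaplacian X j + gradPowerSum j Q

/-- The operator whose values have expectation zero when `X a` is Gaussian with mean
`evenIndicator a` and variance `a`, independent of the other variables. -/
noncomputable def steinOp (a : ℕ) (Q : MvPolynomial ℕ R) : MvPolynomial ℕ R :=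
  X a * Q - evenIndicator a • Q - a • pderiv a Q

lemma mkDerivation_eq_sum_vars {σ : Type*} (f : σ → MvPolynomial σ R) (Q : MvPolynomial σ R) :
    mkDerivation R f Q = ∑ b ∈ Q.vars, f b * pderiv b Q := by
  classical
  let D : Derivation R (MvPolynomial σ R) (MvPolynomial σ R) := ∑ b ∈ Q.vars, f b • pderiv b
  have hD (P : MvPolynomial σ R) : D P = ∑ b ∈ Q.vars, f b * pderiv b P := by
    rw [← Derivation.coeFnAddMonoidHom_apply, map_sum, Finset.sum_apply]
    rfl
  rw [← hD]
  refine derivation_eq_of_forall_mem_vars fun i hi ↦ ?_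
  simp [hD, pderiv_X, Pi.single_apply, hi]

lemma pderiv_comm {σ : Type*} (i j : σ) (Q : MvPolynomial σ R) :
    pderiv i (pderiv j Q) = pderiv j (pderiv i Q) := by
  classical
  have h : ⁅pderiv (R := R) i, pderiv (R := R) j⁆ = 0 := by
    refine derivation_ext fun k ↦ ?_
    simp only [Derivation.commutator_apply, pderiv_X, Pi.single_apply]
    split_ifs <;> simp
  simpa [Derivation.commutator_apply, sub_eq_zero] using DFunLike.congr_fun h Q

lemma steinOp_smul (a : ℕ) (c : R) (Q : MvPolynomial ℕ R) :
    steinOp a (c • Q) = c • steinOp a Q := by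
  simp only [steinOp, Derivation.map_smul, mul_smul_comm, smul_sub, smul_comm c]

lemma sum_range_dist_sub_sum_range_add {M : Type*} [AddCommGroup M] {a N : ℕ} (haN : a ≤ N)
    (H : ℕ → ℕ → M) (hsymm : ∀ i j, H i j = H j i) (hN : ∀ i j, N ≤ i → H i j = 0) :
    ∑ b ∈ Finset.range N, ((b * Nat.dist a b) • H (Nat.dist a b) b - (b * (a + b)) • H (a + b) b) =
      ∑ i ∈ Finset.range a, (i * (a - i)) • H (a - i) i := by
  obtain ⟨d, rfl⟩ := Nat.exists_eq_add_of_le haN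
  have hlow : ∑ b ∈ Finset.range a, (b * Nat.dist a b) • H (Nat.dist a b) b =
      ∑ i ∈ Finset.range a, (i * (a - i)) • H (a - i) i :=
    Finset.sum_congr rfl fun i hi ↦ by
      rw [Nat.dist_eq_sub_of_le_right (Finset.mem_range.1 hi).le]
  have hhigh : ∑ b ∈ Finset.range d,
        ((a + b) * Nat.dist a (a + b)) • H (Nat.dist a (a + b)) (a + b) =
      ∑ b ∈ Finset.range d, (b * (a + b)) • H (a + b) b :=
    Finset.sum_congr rfl fun b _ ↦ by
      rw [Nat.dist_eq_sub_of_le (Nat.le_add_right a b), Nat.add_sub_cancel_left, hsymm,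
        mul_comm (a + b)]
  have hvanish : ∑ b ∈ Finset.range d, (b * (a + b)) • H (a + b) b =
      ∑ b ∈ Finset.range (a + d), (b * (a + b)) • H (a + b) b :=
    Finset.sum_subset (Finset.range_subset_range.2 (Nat.le_add_left d a)) fun b _ hb ↦ by
      rw [hN _ _ (by rw [Finset.mem_range] at hb; lia), smul_zero]
  rw [Finset.sum_sub_distrib, Finset.sum_range_add, hlow, hhigh, hvanish, add_sub_cancel_right]

lemma sum_range_steinOp (a : ℕ) (Q : MvPolynomial ℕ R) :
    ∑ i ∈ Finset.range a, (steinOp (Nat.dist a (2 * i)) Q - steinOp i (X (a - i) * Q)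
        - evenIndicator i • steinOp (a - i) Q - i • steinOp (a - i) (pderiv i Q)) =
      Q * powerSumLaplacian X a
        + ∑ i ∈ Finset.range a, (i * (a - i)) • pderiv (a - i) (pderiv i Q) := by
  have hterm (i : ℕ) : steinOp (Nat.dist a (2 * i)) Q - steinOp i (X (a - i) * Q)
        - evenIndicator i • steinOp (a - i) Q - i • steinOp (a - i) (pderiv i Q) =
      Q * (X (Nat.dist a (2 * i)) - X i * X (a - i)) - evenIndicator a • Q
        + (evenIndicator i * evenIndicator (a - i) + if 2 * i = a then i else 0) • Q
        - Nat.dist a (2 * i) • pderiv (Nat.dist a (2 * i)) Q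
        + (evenIndicator i • (a - i) • pderiv (a - i) Q + evenIndicator (a - i) • i • pderiv i Q)
        + (i * (a - i)) • pderiv (a - i) (pderiv i Q) := by
    have hX : i • pderiv i (X (a - i) : MvPolynomial ℕ R) =
        (if 2 * i = a then i else 0 : ℕ) := by
      rcases Nat.eq_zero_or_pos i with rfl | hi
      · simp
      · rw [pderiv_X, Pi.single_apply]
        simp only [show a - i = i ↔ 2 * i = a by lia]
        split_ifs <;> simp
    simp only [steinOp, evenIndicator_dist_two_mul, pderiv_mul, nsmul_eq_mul] at hX ⊢
    push_cast at hX ⊢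
    linear_combination Q * hX
  simp only [hterm, Finset.sum_add_distrib, Finset.sum_sub_distrib, ← Finset.mul_sum,
    ← Finset.sum_smul]
  rw [← Finset.sum_add_distrib, ← Finset.sum_add_distrib, sum_range_evenIndicator_mul_add_ite,
    ← sum_range_dist_two_mul fun k ↦ k • pderiv k Q, powerSumLaplacian, Finset.sum_sub_distrib,
    Finset.sum_const, Finset.card_range, smul_eq_mul]
  abel

lemma sum_vars_steinOp (a : ℕ) (Q : MvPolynomial ℕ R) :
    ∑ b ∈ Q.vars, b • (steinOp (Nat.dist a b) (pderiv b Q) - steinOp (a + b) (pderiv b Q)) =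
      gradPowerSum a Q - ∑ i ∈ Finset.range a, (i * (a - i)) • pderiv (a - i) (pderiv i Q) := by
  obtain ⟨N, hN⟩ := (insert a Q.vars).exists_nat_subset_range
  have hvars : Q.vars ⊆ Finset.range N := (Finset.subset_insert _ _).trans hN
  have haN : a < N := Finset.mem_range.1 (hN (Finset.mem_insert_self _ _))
  have hzero {b : ℕ} (hb : b ∉ Q.vars) : pderiv b Q = 0 := pderiv_eq_zero_of_notMem_vars hb
  rw [← sum_range_dist_sub_sum_range_add haN.le (fun i j ↦ pderiv i (pderiv j Q))
      (fun i j ↦ pderiv_comm i j Q)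
      (fun i j hi ↦ by
        rw [pderiv_comm, hzero fun h ↦ hi.not_gt (Finset.mem_range.1 (hvars h)), map_zero]),
    gradPowerSum, mkDerivation_eq_sum_vars,
    ← Finset.sum_subset hvars fun b _ hb ↦ by simp [hzero hb], ← Finset.sum_sub_distrib]
  refine Finset.sum_congr rfl fun b _ ↦ ?_
  simp only [steinOp, evenIndicator_dist, powerSumGradInner, nsmul_eq_mul]
  push_cast
  ring

theorem divPowerSum_eq_sum_steinOp (a : ℕ) (Q : MvPolynomial ℕ R) :
    divPowerSum a Q =
      ∑ i ∈ Finset.range a, (steinOp (Nat.dist a (2 * i)) Q - steinOp i (X (a - i) * Q)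
        - evenIndicator i • steinOp (a - i) Q - i • steinOp (a - i) (pderiv i Q))
      + ∑ b ∈ Q.vars, b • (steinOp (Nat.dist a b) (pderiv b Q) - steinOp (a + b) (pderiv b Q)) := by
  rw [sum_range_steinOp, sum_vars_steinOp, divPowerSum]
  abel

end PowerSumPolynomials

section Contraction

lemma eq_zero_of_forall_mul_abs_le {α : Type*} {S : Set α} (hS : S.Finite) {f : α → ℝ} {c m : ℝ}
    (hcm : c < m) (hf : ∀ x ∈ S, ∀ B, (∀ y ∈ S, |f y| ≤ B) → m * |f x| ≤ c * B) :
    ∀ x ∈ S, f x = 0 := by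
  intro x hx
  obtain ⟨y, hy, hmax⟩ := hS.exists_maximalFor (fun y ↦ |f y|) S ⟨x, hx⟩
  have hle {z : α} (hz : z ∈ S) : |f z| ≤ |f y| :=
    (le_total _ _).elim id fun h ↦ hmax hz h
  have hy_zero : |f y| ≤ 0 := by
    nlinarith [hf y hy _ fun z hz ↦ hle hz]
  exact abs_nonpos_iff.1 ((hle hx).trans hy_zero)

end Contraction

section GreenFunctional

open MvPolynomial

lemma pderiv_monomial_one (b : ℕ) (s : ℕ →₀ ℕ) :
    pderiv b (monomial s (1 : ℝ)) = (s b : ℝ) • monomial (s - Finsupp.single b 1) 1 := by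
  rw [pderiv_monomial, smul_monomial, smul_eq_mul, mul_comm]

lemma finite_setOf_weight_id_le (D : ℕ) :
    {s : ℕ →₀ ℕ | s 0 = 0 ∧ Finsupp.weight id s ≤ D}.Finite := by
  let I := Finset.range (D + 1)
  refine (I.finsupp fun _ ↦ I).finite_toSet.subset fun s ⟨hs, hD⟩ ↦ ?_
  have hk {k : ℕ} (hk : s k ≠ 0) : k ≤ D := (Finsupp.le_weight_of_ne_zero' id hk).trans hD
  have hsk (k : ℕ) : s k ≤ D := by
    rcases eq_or_ne k 0 with rfl | hk0
    · lia
    · exact (Finsupp.le_weight id hk0 s).trans hD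
  simp only [I, Finset.mem_coe, Finset.mem_finsupp_iff, Finset.mem_range, Nat.lt_succ_iff]
  exact ⟨fun k h ↦ Finset.mem_range_succ_iff.2 (hk (Finsupp.mem_support_iff.1 h)),
    fun k _ ↦ hsk k⟩

lemma map_steinOp (L : MvPolynomial ℕ ℝ →ₗ[ℝ] ℝ) (a : ℕ) (Q : MvPolynomial ℕ ℝ) :
    L (steinOp a Q) = L (X a * Q) - evenIndicator a * L Q - a * L (pderiv a Q) := by
  rw [steinOp, map_sub, map_sub, map_nsmul, map_nsmul, nsmul_eq_mul, nsmul_eq_mul]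

/-- The algebraic properties of the expectation, on `SO(n,ℝ)` with `n = m`, of polynomials in the
power sums `p_k = X k`. -/
structure IsGreenFunctional (m : ℝ) (L : MvPolynomial ℕ ℝ →ₗ[ℝ] ℝ) : Prop where
  map_one : L 1 = 1
  map_X_zero_mul (Q : MvPolynomial ℕ ℝ) : L (X 0 * Q) = m * L Q
  map_divPowerSum (a : ℕ) (Q : MvPolynomial ℕ ℝ) : L (divPowerSum a Q) = 0

/-- The identities `L (steinOp c (X ^ s)) = 0` of total weight `c + ∑ k, k * s k < D`. -/
def SteinBelow (L : MvPolynomial ℕ ℝ →ₗ[ℝ] ℝ) (D : ℕ) : Prop :=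
  ∀ c s, c ≠ 0 → s 0 = 0 → c + Finsupp.weight id s < D → L (steinOp c (monomial s 1)) = 0

namespace IsGreenFunctional

variable {m : ℝ} {L : MvPolynomial ℕ ℝ →ₗ[ℝ] ℝ} (hL : IsGreenFunctional m L)
include hL

lemma map_steinOp_zero (Q : MvPolynomial ℕ ℝ) : L (steinOp 0 Q) = (m - 1) * L Q := by
  simp [steinOp, evenIndicator, hL.map_X_zero_mul, sub_mul]

variable {D : ℕ} (h : SteinBelow L D)
include h

lemma map_steinOp_monomial {c : ℕ} {s : ℕ →₀ ℕ} (hs : s 0 = 0)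
    (hD : c + Finsupp.weight id s < D) :
    L (steinOp c (monomial s 1)) = if c = 0 then (m - 1) * L (monomial s 1) else 0 := by
  split_ifs with hc
  · rw [hc, hL.map_steinOp_zero]
  · exact h c s hc hs hD

lemma map_steinOp_pderiv_monomial {b c : ℕ} {s : ℕ →₀ ℕ} (hs : s 0 = 0)
    (hD : c + Finsupp.weight id s < D + b) :
    L (steinOp c (pderiv b (monomial s 1))) =
      if c = 0 then (m - 1) * L (pderiv b (monomial s 1)) else 0 := by
  by_cases hb : s b = 0
  · simp [hb, steinOp]
  · have hweight := Finsupp.weight_sub_single_add (w := id) hb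
    rw [pderiv_monomial_one, steinOp_smul, map_smul, map_smul,
      hL.map_steinOp_monomial h (by simp [hs]) (by simp only [id_eq] at hweight; lia)]
    split_ifs <;> simp [mul_left_comm]

lemma map_sum_range_steinOp {a : ℕ} {s : ℕ →₀ ℕ} (ha : 0 < a) (hs : s 0 = 0)
    (hD : a + Finsupp.weight id s = D) :
    L (∑ i ∈ Finset.range a, (steinOp (Nat.dist a (2 * i)) (monomial s 1)
        - steinOp i (X (a - i) * monomial s 1) - evenIndicator i • steinOp (a - i) (monomial s 1)
        - i • steinOp (a - i) (pderiv i (monomial s 1)))) =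
      (m - 1) * (evenIndicator a * L (monomial s 1) - L (X a * monomial s 1))
        - ∑ i ∈ Finset.Ico 1 a, L (steinOp i (monomial (s + Finsupp.single (a - i) 1) 1)) := by
  have hterm {i : ℕ} (hi : i ∈ Finset.Ico 1 a) :
      L (steinOp (Nat.dist a (2 * i)) (monomial s 1) - steinOp i (X (a - i) * monomial s 1)
        - evenIndicator i • steinOp (a - i) (monomial s 1)
        - i • steinOp (a - i) (pderiv i (monomial s 1))) =
      (if 2 * i = a then (m - 1) * L (monomial s 1) else 0)
        - L (steinOp i (monomial (s + Finsupp.single (a - i) 1) 1)) := by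
    obtain ⟨h1i, hia⟩ := Finset.mem_Ico.1 hi
    have hdist : Nat.dist a (2 * i) = 0 ↔ 2 * i = a := by simp only [Nat.dist]; lia
    have hX : X (a - i) * monomial s (1 : ℝ) = monomial (s + Finsupp.single (a - i) 1) 1 := by
      rw [X, monomial_mul, add_comm, one_mul]
    simp only [map_sub, map_nsmul, hX]
    rw [hL.map_steinOp_monomial h hs (by simp only [Nat.dist]; lia),
      hL.map_steinOp_monomial h (c := a - i) hs (by lia),
      hL.map_steinOp_pderiv_monomial h hs (by lia), if_neg (by lia : a - i ≠ 0),
      if_neg (by lia : a - i ≠ 0)]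
    simp [hdist]
  have hhalf : (∑ i ∈ Finset.Ico 1 a, if 2 * i = a then (m - 1) * L (monomial s 1) else 0) =
      evenIndicator a * ((m - 1) * L (monomial s 1)) := by
    rw [← nsmul_eq_mul, ← sum_range_ite_two_mul_eq ha fun _ ↦ (m - 1) * L (monomial s 1),
      Finset.range_eq_Ico, Finset.sum_eq_sum_Ico_succ_bot ha, if_neg (by lia), zero_add]
  rw [map_sum, Finset.range_eq_Ico, Finset.sum_eq_sum_Ico_succ_bot ha,
    Finset.sum_congr rfl fun i hi ↦ hterm hi, Finset.sum_sub_distrib, hhalf]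
  simp only [Nat.dist, evenIndicator, map_sub, hL.map_steinOp_zero, mul_zero, Nat.sub_zero,
    Nat.zero_sub, add_zero, Even.zero, if_true, one_smul, zero_smul, sub_zero]
  ring

lemma map_sum_vars_steinOp {a : ℕ} {s : ℕ →₀ ℕ} (ha : 0 < a) (hs : s 0 = 0)
    (hD : a + Finsupp.weight id s = D) :
    L (∑ b ∈ (monomial s (1 : ℝ)).vars, b • (steinOp (Nat.dist a b) (pderiv b (monomial s 1))
        - steinOp (a + b) (pderiv b (monomial s 1)))) =
      (m - 1) * (a * L (pderiv a (monomial s 1)))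
        - s.sum fun b k ↦ (b * k) • L (steinOp (a + b) (monomial (s - Finsupp.single b 1) 1)) := by
  have hterm {b : ℕ} (hb : b ∈ s.support) :
      L (b • (steinOp (Nat.dist a b) (pderiv b (monomial s 1))
        - steinOp (a + b) (pderiv b (monomial s 1)))) =
      (if a = b then (m - 1) * (b * L (pderiv b (monomial s 1))) else 0)
        - (b * s b) • L (steinOp (a + b) (monomial (s - Finsupp.single b 1) 1)) := by
    have hb0 : b ≠ 0 := by
      rintro rfl
      exact Finsupp.mem_support_iff.1 hb hs
    have hdist : Nat.dist a b = 0 ↔ a = b := by simp only [Nat.dist]; lia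
    rw [map_nsmul, map_sub,
      hL.map_steinOp_pderiv_monomial h hs (by simp only [Nat.dist]; lia), pderiv_monomial_one,
      steinOp_smul, map_smul, map_smul]
    simp only [hdist, nsmul_eq_mul, smul_eq_mul]
    split_ifs <;> push_cast <;> ring
  rw [vars_monomial one_ne_zero, map_sum, Finset.sum_congr rfl fun b hb ↦ hterm hb,
    Finset.sum_sub_distrib, Finset.sum_ite_eq, Finsupp.sum, ite_eq_left_iff.2]
  intro ha_mem
  simp [Finsupp.notMem_support_iff.1 ha_mem]

lemma sub_one_mul_map_steinOp {a : ℕ} {s : ℕ →₀ ℕ} (ha : 0 < a) (hs : s 0 = 0)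
    (hD : a + Finsupp.weight id s = D) :
    (m - 1) * L (steinOp a (monomial s 1)) =
      -∑ i ∈ Finset.Ico 1 a, L (steinOp i (monomial (s + Finsupp.single (a - i) 1) 1))
        - s.sum fun b k ↦ (b * k) • L (steinOp (a + b) (monomial (s - Finsupp.single b 1) 1)) := by
  have hGreen := hL.map_divPowerSum a (monomial s 1)
  rw [divPowerSum_eq_sum_steinOp, map_add, hL.map_sum_range_steinOp h ha hs hD,
    hL.map_sum_vars_steinOp h ha hs hD] at hGreen
  rw [map_steinOp L a]
  linear_combination -hGreen

lemma sub_one_mul_abs_map_steinOp_le (hm : 1 ≤ m) {a : ℕ} {s : ℕ →₀ ℕ} (ha : a ≠ 0) (hs : s 0 = 0)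
    (hD : a + Finsupp.weight id s = D) {B : ℝ}
    (hB : ∀ c t, c ≠ 0 → t 0 = 0 → c + Finsupp.weight id t = D →
      |L (steinOp c (monomial t 1))| ≤ B) :
    (m - 1) * |L (steinOp a (monomial s 1))| ≤ (D - 1) * B := by
  have hIco : |∑ i ∈ Finset.Ico 1 a, L (steinOp i (monomial (s + Finsupp.single (a - i) 1) 1))| ≤
      (a - 1 : ℕ) • B := by
    refine (Finset.abs_sum_le_sum_abs _ _).trans <|
      (Finset.sum_le_card_nsmul _ _ B fun i hi ↦ ?_).trans_eq (by rw [Nat.card_Ico])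
    obtain ⟨h1i, hia⟩ := Finset.mem_Ico.1 hi
    refine hB _ _ (by lia) ?_ ?_
    · simp [hs, show a - i ≠ 0 by lia]
    · rw [map_add, Finsupp.weight_single, one_smul, id_eq]
      lia
  have hsum : |s.sum fun b k ↦
      (b * k) • L (steinOp (a + b) (monomial (s - Finsupp.single b 1) 1))| ≤
      Finsupp.weight id s • B := by
    rw [Finsupp.weight_apply, Finsupp.sum, Finsupp.sum, Finset.sum_smul]
    refine (Finset.abs_sum_le_sum_abs _ _).trans <| Finset.sum_le_sum fun b hb ↦ ?_
    have hweight := Finsupp.weight_sub_single_add (w := id) (Finsupp.mem_support_iff.1 hb)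
    rw [abs_nsmul, smul_eq_mul, mul_comm b]
    refine nsmul_le_nsmul_right (hB _ _ (by lia) (by simp [hs]) ?_) _
    simp only [id_eq] at hweight
    lia
  calc (m - 1) * |L (steinOp a (monomial s 1))|
      = |(m - 1) * L (steinOp a (monomial s 1))| := by
        rw [abs_mul, abs_of_nonneg (sub_nonneg.2 hm)]
    _ ≤ (a - 1 : ℕ) • B + Finsupp.weight id s • B := by
        rw [hL.sub_one_mul_map_steinOp h (Nat.pos_of_ne_zero ha) hs hD]
        exact (abs_sub _ _).trans (add_le_add ((abs_neg _).trans_le hIco) hsum)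
    _ = (D - 1) * B := by
        rw [← add_smul, nsmul_eq_mul, ← hD, ← Nat.sub_add_comm (Nat.one_le_iff_ne_zero.2 ha),
          Nat.cast_sub (by lia), Nat.cast_one]

lemma steinBelow_succ (hDm : D < m) : SteinBelow L (D + 1) := by
  intro a s ha hs hD
  rcases Nat.lt_succ_iff_lt_or_eq.1 hD with hlt | heq
  · exact h a s ha hs hlt
  let S : Set (ℕ × (ℕ →₀ ℕ)) := {x | x.1 ≠ 0 ∧ x.2 0 = 0 ∧ x.1 + Finsupp.weight id x.2 = D}
  have hS : S.Finite :=
    ((Set.finite_Iic D).prod (finite_setOf_weight_id_le D)).subset fun x ⟨_, h0, hx⟩ ↦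
      ⟨Set.mem_Iic.2 (by lia), h0, by lia⟩
  have hm : 1 ≤ m := by
    have : (1 : ℝ) ≤ D := by exact_mod_cast (by lia : 1 ≤ D)
    linarith
  exact eq_zero_of_forall_mul_abs_le hS (f := fun x ↦ L (steinOp x.1 (monomial x.2 1)))
    (c := D - 1) (m := m - 1) (by linarith)
    (fun x ⟨hx, h0, hxD⟩ B hB ↦ hL.sub_one_mul_abs_map_steinOp_le h hm hx h0 hxD
      fun c t hc ht hct ↦ hB (c, t) ⟨hc, ht, hct⟩)
    (a, s) ⟨ha, hs, heq⟩

omit h in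
theorem steinBelow (hD : D ≤ m) : SteinBelow L D := by
  induction D with
  | zero => exact fun _ _ _ _ h ↦ absurd h (Nat.not_lt_zero _)
  | succ D ih =>
    push_cast at hD
    exact hL.steinBelow_succ (ih (by linarith)) (by linarith)

end IsGreenFunctional

end GreenFunctional

section Moments

open MvPolynomial

/-- `-(Δp_j / j + n * (p_j - evenIndicator j))`, the error in the approximate eigenvalue equation
`Δp_j ≈ -n * j * (p_j - evenIndicator j)` on `SO(n,ℝ)`. -/
def powerSumRemainder {R : Type*} [CommRing R] (n : ℕ) (p : ℕ → R) (j : ℕ) : R :=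
  -powerSumLaplacian p j - n * (p j - evenIndicator j)

lemma map_powerSumRemainder {R S : Type*} [CommRing R] [CommRing S] (f : R →+* S) (n : ℕ)
    (p : ℕ → R) (j : ℕ) :
    f (powerSumRemainder n p j) = powerSumRemainder n (fun k ↦ f (p k)) j := by
  simp [powerSumRemainder, map_powerSumLaplacian]

lemma powerSumRemainder_mul {R : Type*} [CommRing R] (n : ℕ) (p : ℕ → R) (j : ℕ) (q : R) :
    powerSumRemainder n p j * q =
      -(q * powerSumLaplacian p j) - (n • (p j * q) - (n * evenIndicator j) • q) := by
  simp only [powerSumRemainder, nsmul_eq_mul]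
  push_cast
  ring

lemma gradPowerSum_X {R : Type*} [CommRing R] (j c : ℕ) :
    gradPowerSum (R := R) j (X c) = c • (X (Nat.dist j c) - X (j + c)) :=
  mkDerivation_X _ _ _

lemma sum_range_mul_sub (j : ℕ) (c : ℝ) :
    ∑ i ∈ Finset.range j, (i : ℝ) * (c - i) = j * (j - 1) * (3 * c - 2 * j + 1) / 6 := by
  induction j with
  | zero => simp
  | succ j ih =>
    rw [Finset.sum_range_succ, ih]
    push_cast
    ring

namespace IsGreenFunctional

variable {n : ℕ} {L : MvPolynomial ℕ ℝ →ₗ[ℝ] ℝ} (hL : IsGreenFunctional n L)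
include hL

lemma map_X {a : ℕ} (ha : a ≠ 0) (h : a < n) : L (X a) = evenIndicator a := by
  have hstein : L (steinOp a (monomial 0 1)) = 0 :=
    hL.steinBelow le_rfl a 0 ha rfl (by simpa using h)
  rw [map_steinOp, ← one_def, mul_one, pderiv_one, hL.map_one] at hstein
  simpa [sub_eq_zero] using hstein

lemma map_steinOp_X {a b : ℕ} (ha : a ≠ 0) (hb : b ≠ 0) (h : a + b < n) :
    L (steinOp a (X b)) = 0 :=
  hL.steinBelow le_rfl a (Finsupp.single b 1) ha (by simp [hb])
    (by simpa [Finsupp.weight_single] using h)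

lemma map_steinOp_X_mul_X {a b c : ℕ} (ha : a ≠ 0) (hb : b ≠ 0) (hc : c ≠ 0) (h : a + b + c < n) :
    L (steinOp a (X b * X c)) = 0 := by
  rw [X, X, monomial_mul, one_mul]
  exact hL.steinBelow le_rfl a _ ha (by simp [hb, hc])
    (by simpa [Finsupp.weight_single, add_assoc] using h)

lemma map_X_mul_X {a b : ℕ} (ha : a ≠ 0) (hb : b ≠ 0) (h : a + b < n) :
    L (X a * X b) = evenIndicator a * evenIndicator b + if a = b then (a : ℝ) else 0 := by
  have hstein := hL.map_steinOp_X ha hb h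
  rw [map_steinOp, hL.map_X hb (by lia), pderiv_X, Pi.single_apply] at hstein
  rw [sub_sub, sub_eq_zero] at hstein
  rw [hstein]
  simp [eq_comm (a := b), apply_ite L, hL.map_one]

lemma map_powerSumRemainder_mul {j : ℕ} {Q : MvPolynomial ℕ ℝ} (hQ : L (steinOp j Q) = 0) :
    L (powerSumRemainder n X j * Q) = L (gradPowerSum j Q) - n * j * L (pderiv j Q) := by
  have hGreen := hL.map_divPowerSum j Q
  rw [divPowerSum, map_add] at hGreen
  rw [map_steinOp] at hQ
  rw [powerSumRemainder_mul, map_sub, map_neg, map_sub, map_nsmul, map_nsmul, nsmul_eq_mul,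
    nsmul_eq_mul]
  push_cast
  linear_combination -hGreen - n * hQ

variable {j : ℕ} (hj : j ≠ 0) (h : 2 * j < n)
include hj h

lemma map_powerSumRemainder : L (powerSumRemainder n X j) = 0 := by
  have hstein : L (steinOp j (monomial 0 1)) = 0 :=
    hL.steinBelow le_rfl j 0 hj rfl (by simp; lia)
  rw [← one_def] at hstein
  simpa using hL.map_powerSumRemainder_mul hstein

lemma map_powerSumRemainder_mul_X {c : ℕ} (hc : c ≤ j) :
    L (powerSumRemainder n X j * X c) = if c = j then -(j : ℝ) else 0 := by
  rcases Nat.eq_zero_or_pos c with rfl | hc_pos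
  · rw [mul_comm, hL.map_X_zero_mul, hL.map_powerSumRemainder hj h, mul_zero, if_neg hj.symm]
  rw [hL.map_powerSumRemainder_mul (hL.map_steinOp_X hj hc_pos.ne' (by lia)), gradPowerSum_X,
    map_nsmul, map_sub, hL.map_X (a := j + c) (by lia) (by lia), pderiv_X, Pi.single_apply]
  split_ifs with hcj
  · have hX0 : L (X 0) = n := by simpa [hL.map_one] using hL.map_X_zero_mul 1
    simp [hcj, Nat.dist_self, hX0, hL.map_one, evenIndicator]
    ring
  · rw [hL.map_X (by simp only [Nat.dist]; lia) (by simp only [Nat.dist]; lia), evenIndicator_dist]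
    simp

lemma map_powerSumRemainder_mul_X_mul_X {k l : ℕ} (hk : k ≠ 0) (hl : l ≠ 0) (hkl : k + l = j) :
    L (powerSumRemainder n X j * (X k * X l)) = 2 * k * l := by
  have hgrad {a b : ℕ} (ha : a ≠ 0) (hb : b ≠ 0) (hab : a + b = j) :
      L (X a * gradPowerSum j (X b)) = a * b := by
    have hdist : Nat.dist j b = a := by simp only [Nat.dist]; lia
    rw [gradPowerSum_X, mul_smul_comm, map_nsmul, mul_sub, map_sub, hdist,
      hL.map_X_mul_X ha ha (by lia), hL.map_X_mul_X ha (by lia) (by lia), if_pos rfl,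
      if_neg (by lia), evenIndicator_congr (show (j + b) % 2 = a % 2 by lia)]
    simp [mul_comm]
  rw [hL.map_powerSumRemainder_mul (hL.map_steinOp_X_mul_X hj hk hl (by lia)), Derivation.leibniz,
    Derivation.leibniz, pderiv_X_of_ne (by lia), pderiv_X_of_ne (by lia), smul_eq_mul, smul_eq_mul,
    map_add, hgrad hk hl hkl, hgrad hl hk (by lia)]
  simp
  ring

theorem map_powerSumRemainder_sq :
    L (powerSumRemainder n X j * powerSumRemainder n X j) = (j ^ 3 + 2 * j) / 3 := by
  have hterm {i : ℕ} (hi : i ∈ Finset.range j) :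
      L (powerSumRemainder n X j * (X (Nat.dist j (2 * i)) - X i * X (j - i))) =
      (if i = 0 then (n * j - j : ℝ) else 0) - 2 * (i * (j - i)) := by
    have hij := Finset.mem_range.1 hi
    have hdist : Nat.dist j (2 * i) = j ↔ i = 0 := by simp only [Nat.dist]; lia
    rw [mul_sub, map_sub,
      hL.map_powerSumRemainder_mul_X hj h (by simp only [Nat.dist]; lia)]
    simp only [hdist]
    split_ifs with hi0
    · rw [hi0, mul_left_comm, hL.map_X_zero_mul, Nat.sub_zero,
        hL.map_powerSumRemainder_mul_X hj h le_rfl, if_pos rfl]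
      simp
      ring
    · rw [hL.map_powerSumRemainder_mul_X_mul_X hj h hi0 (by lia) (by lia), Nat.cast_sub hij.le]
      ring
  rw [powerSumRemainder_mul, powerSumLaplacian, Finset.mul_sum, map_sub, map_neg, map_sum,
    Finset.sum_congr rfl fun i hi ↦ hterm hi,
    Finset.sum_sub_distrib, Finset.sum_ite_eq', if_pos (by simpa [Nat.pos_iff_ne_zero]),
    ← Finset.mul_sum, sum_range_mul_sub, mul_comm (X j), map_sub, map_nsmul, map_nsmul,
    hL.map_powerSumRemainder hj h, hL.map_powerSumRemainder_mul_X hj h le_rfl, if_pos rfl,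
    nsmul_eq_mul]
  ring

end IsGreenFunctional

end Moments

section ChainRule

open MvPolynomial

lemma hasDerivAt_eval {σ : Type*} {x : ℝ → σ → ℝ} {x' : σ → ℝ} {t : ℝ} (Q : MvPolynomial σ ℝ)
    (hx : ∀ i ∈ Q.vars, HasDerivAt (fun s ↦ x s i) (x' i) t) :
    HasDerivAt (fun s ↦ eval (x s) Q) (∑ i ∈ Q.vars, x' i * eval (x t) (pderiv i Q)) t := by
  classical
  suffices h : ∀ P ∈ supported ℝ (Q.vars : Set σ),
      HasDerivAt (fun s ↦ eval (x s) P) (∑ i ∈ Q.vars, x' i * eval (x t) (pderiv i P)) t from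
    h Q (mem_supported_vars Q)
  intro P hP
  induction hP using Algebra.adjoin_induction with
  | mem P hP =>
    obtain ⟨i, hi, rfl⟩ := hP
    have hi' : i ∈ Q.vars := hi
    simpa [pderiv_X, Pi.single_apply, apply_ite (eval (x t)), hi'] using hx i hi
  | algebraMap r => simpa [algebraMap_eq] using hasDerivAt_const t r
  | add P P' _ _ hP hP' =>
    simp only [map_add]
    exact (hP.add hP').congr_deriv (by simp [mul_add, Finset.sum_add_distrib])
  | mul P P' _ _ hP hP' =>
    simp only [map_mul]
    refine (hP.mul hP').congr_deriv ?_
    simp only [pderiv_mul, map_add, map_mul, mul_add, Finset.sum_add_distrib, Finset.sum_mul,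
      Finset.mul_sum]
    congr 1 <;> exact Finset.sum_congr rfl fun i _ ↦ by ring

end ChainRule

namespace SO

open MvPolynomial

variable {n : ℕ}

lemma hasPowerSumDeriv_eval (Q : MvPolynomial ℕ ℝ) :
    HasPowerSumDeriv (n := n) Q.vars (fun M ↦ eval (powerSum M) Q)
      (fun b M ↦ eval (powerSum M) (pderiv b Q)) := fun X M ↦
  (hasDerivAt_eval Q fun b _ ↦ hasLieDeriv_powerSum X b M).congr_deriv
    (by simp [expSkew_zero])

@[fun_prop]
lemma continuous_eval_powerSum (Q : MvPolynomial ℕ ℝ) :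
    Continuous fun M : SO n ↦ eval (powerSum M) Q :=
  Q.continuous_eval.comp (continuous_pi continuous_powerSum)

lemma eval_divPowerSum (M : SO n) (j : ℕ) (Q : MvPolynomial ℕ ℝ) :
    eval (powerSum M) (divPowerSum j Q) =
      eval (powerSum M) Q * powerSumLaplacian (powerSum M) j
        + ∑ b ∈ Q.vars,
          b * eval (powerSum M) (pderiv b Q) * powerSumGradInner (powerSum M) j b := by
  simp only [divPowerSum, gradPowerSum, mkDerivation_eq_sum_vars, map_add, map_mul,
    map_powerSumLaplacian, eval_X, map_sum, powerSumGradInner, map_sub, nsmul_eq_mul, map_natCast]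
  congr 1
  exact Finset.sum_congr rfl fun b _ ↦ by ring

variable (μ : Measure (SO n)) [IsFiniteMeasure μ]

/-- The expectation of a polynomial in the power sums of a random element of `SO n`. -/
noncomputable def powerSumExpectation : MvPolynomial ℕ ℝ →ₗ[ℝ] ℝ where
  toFun Q := ∫ M, eval (powerSum M) Q ∂μ
  map_add' P Q := by
    simp only [map_add]
    exact integral_add (integrable_of_continuous (by fun_prop))
      (integrable_of_continuous (by fun_prop))
  map_smul' c Q := by
    simp only [smul_eval, integral_const_mul, RingHom.id_apply, smul_eq_mul]

theorem isGreenFunctional_powerSumExpectation (μ : Measure (SO n)) [IsProbabilityMeasure μ]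
    [μ.IsMulLeftInvariant] : IsGreenFunctional n (powerSumExpectation μ) where
  map_one := by simp [powerSumExpectation]
  map_X_zero_mul Q := by
    simp [powerSumExpectation, powerSum_zero, integral_const_mul]
  map_divPowerSum a Q := by
    change ∫ M, eval (powerSum M) (divPowerSum a Q) ∂μ = 0
    simp only [eval_divPowerSum]
    exact (hasPowerSumDeriv_eval Q).integral_eq_zero (by fun_prop) (fun b _ ↦ by fun_prop) a

variable {μ : Measure (SO n)} [IsProbabilityMeasure μ] [μ.IsMulLeftInvariant] {j : ℕ}

lemma integral_powerSumRemainder_sq (hj : j ≠ 0) (h : 2 * j < n) :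
    ∫ M, powerSumRemainder n (powerSum M) j ^ 2 ∂μ = (j ^ 3 + 2 * j) / 3 := by
  rw [← (isGreenFunctional_powerSumExpectation μ).map_powerSumRemainder_sq hj h]
  simp [powerSumExpectation, map_powerSumRemainder, sq]

lemma integral_powerSum_sq (hj : j ≠ 0) (h : 2 * j < n) :
    ∫ M, powerSum M j ^ 2 ∂μ = evenIndicator j + j := by
  have hmoment := (isGreenFunctional_powerSumExpectation μ).map_X_mul_X hj hj (by lia)
  have hsq : (evenIndicator j : ℝ) ^ 2 = evenIndicator j := by
    unfold evenIndicator
    split_ifs <;> simp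
  simpa [powerSumExpectation, ← sq, hsq] using hmoment

end SO

section Gaussian

local notation "φ" => gaussianPDFReal 0 1

lemma gaussianPDFReal_zero_one (x : ℝ) :
    φ x = (Real.sqrt (2 * Real.pi))⁻¹ * Real.exp (-x ^ 2 / 2) := by
  simp [gaussianPDFReal]

lemma Phi_eq_gaussianReal_real_Iic (x : ℝ) : Phi x = (gaussianReal 0 1).real (Set.Iic x) := by
  rw [Measure.real, gaussianReal_apply_eq_integral 0 one_ne_zero,
    ENNReal.toReal_ofReal (integral_nonneg (gaussianPDFReal_nonneg 0 1)), Phi]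
  simp only [gaussianPDFReal_zero_one, integral_const_mul]

lemma gaussianPDFReal_zero_one_pos (x : ℝ) : 0 < φ x :=
  gaussianPDFReal_pos 0 1 x one_ne_zero

lemma gaussianPDFReal_zero_one_neg (x : ℝ) : φ (-x) = φ x := by
  simp [gaussianPDFReal_zero_one]

lemma hasDerivAt_gaussianPDFReal_zero_one (x : ℝ) : HasDerivAt φ (-(x * φ x)) x := by
  have hexp : HasDerivAt (fun x : ℝ ↦ -x ^ 2 / 2) (-x) x :=
    ((hasDerivAt_pow 2 x).neg.div_const 2).congr_deriv (by simp; ring)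
  rw [funext gaussianPDFReal_zero_one]
  exact (hexp.exp.const_mul _).congr_deriv (by ring)

lemma continuous_gaussianPDFReal_zero_one : Continuous φ :=
  continuous_iff_continuousAt.2 fun x ↦ (hasDerivAt_gaussianPDFReal_zero_one x).continuousAt

lemma integrable_mul_gaussianPDFReal_zero_one : Integrable fun x ↦ x * φ x := by
  have h := (integrable_mul_exp_neg_mul_sq one_half_pos).const_mul (Real.sqrt (2 * Real.pi))⁻¹
  refine h.congr (ae_of_all _ fun x ↦ ?_)
  simp only [gaussianPDFReal_zero_one]
  rw [mul_left_comm]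
  ring_nf

lemma mul_integral_Ioi_gaussianPDFReal_le (w : ℝ) : w * ∫ x in Set.Ioi w, φ x ≤ φ w := by
  have hint : IntegrableOn (fun x ↦ x * φ x) (Set.Ioi w) :=
    integrable_mul_gaussianPDFReal_zero_one.integrableOn
  have hφ : IntegrableOn φ (Set.Ioi w) := (integrable_gaussianPDFReal 0 1).integrableOn
  have hderiv (x : ℝ) (_ : x ∈ Set.Ici w) := hasDerivAt_gaussianPDFReal_zero_one x
  have hftc : ∫ x in Set.Ioi w, -(x * φ x) = 0 - φ w :=
    integral_Ioi_of_hasDerivAt_of_tendsto' hderiv hint.neg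
      (tendsto_zero_of_hasDerivAt_of_integrableOn_Ioi (a := w)
        (fun x hx ↦ hderiv x (Set.mem_Ici_of_Ioi hx)) hint.neg hφ)
  rw [integral_neg] at hftc
  calc w * ∫ x in Set.Ioi w, φ x = ∫ x in Set.Ioi w, w * φ x := (integral_const_mul _ _).symm
    _ ≤ ∫ x in Set.Ioi w, x * φ x :=
        setIntegral_mono_on (hφ.const_mul w) hint measurableSet_Ioi fun x hx ↦
          mul_le_mul_of_nonneg_right (Set.mem_Ioi.1 hx).le (gaussianPDFReal_nonneg 0 1 x)
    _ = φ w := by linarith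

lemma integral_Ioi_gaussianPDFReal_le {w : ℝ} (hw : 0 ≤ w) : ∫ x in Set.Ioi w, φ x ≤ 3 * φ w := by
  have hint : Integrable fun x ↦ 3 * φ w * φ (x - w) :=
    ((integrable_gaussianPDFReal 0 1).comp_sub_right w).const_mul _
  have hpoint {x : ℝ} (hx : x ∈ Set.Ioi w) : φ x ≤ 3 * φ w * φ (x - w) := by
    have hsqrt : Real.sqrt (2 * Real.pi) ≤ 3 :=
      Real.sqrt_le_iff.2 ⟨by norm_num, by linarith [Real.pi_lt_four]⟩
    have hexp : Real.exp (-x ^ 2 / 2) ≤ Real.exp (-w ^ 2 / 2) * Real.exp (-(x - w) ^ 2 / 2) := by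
      rw [← Real.exp_add]
      exact Real.exp_le_exp.2 (by nlinarith [Set.mem_Ioi.1 hx])
    calc φ x ≤ (Real.sqrt (2 * Real.pi))⁻¹
            * (Real.exp (-w ^ 2 / 2) * Real.exp (-(x - w) ^ 2 / 2)) := by
          rw [gaussianPDFReal_zero_one]
          gcongr
      _ = Real.sqrt (2 * Real.pi) * φ w * φ (x - w) := by
          simp only [gaussianPDFReal_zero_one]
          field_simp
      _ ≤ 3 * φ w * φ (x - w) := by
          gcongr <;> exact gaussianPDFReal_nonneg 0 1 _
  calc ∫ x in Set.Ioi w, φ x ≤ ∫ x in Set.Ioi w, 3 * φ w * φ (x - w) :=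
        setIntegral_mono_on (integrable_gaussianPDFReal 0 1).integrableOn hint.integrableOn
          measurableSet_Ioi fun x hx ↦ hpoint hx
    _ ≤ ∫ x, 3 * φ w * φ (x - w) :=
        setIntegral_le_integral hint <| ae_of_all _ fun x ↦
          mul_nonneg (mul_nonneg zero_le_three (gaussianPDFReal_nonneg 0 1 w))
            (gaussianPDFReal_nonneg 0 1 _)
    _ = 3 * φ w := by
        rw [integral_const_mul, integral_sub_right_eq_self (fun x ↦ φ x),
          integral_gaussianPDFReal_eq_one 0 one_ne_zero, mul_one]

variable {k : ℝ → ℝ} {K : ℝ}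

lemma integrable_mul_gaussianPDFReal (hk : Continuous k) (hK : ∀ x, |k x| ≤ K) :
    Integrable fun x ↦ k x * φ x :=
  (integrable_gaussianPDFReal 0 1).bdd_mul hk.aestronglyMeasurable (ae_of_all _ hK)

lemma abs_integral_Ioi_mul_gaussianPDFReal_le (hK : ∀ x, |k x| ≤ K) (w : ℝ) :
    |∫ x in Set.Ioi w, k x * φ x| ≤ K * ∫ x in Set.Ioi w, φ x := by
  rw [← integral_const_mul, ← Real.norm_eq_abs]
  refine norm_integral_le_of_norm_le
    ((integrable_gaussianPDFReal 0 1).const_mul K).integrableOn (ae_of_all _ fun x ↦ ?_)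
  rw [norm_mul, Real.norm_of_nonneg (gaussianPDFReal_nonneg 0 1 x)]
  exact mul_le_mul_of_nonneg_right (hK x) (gaussianPDFReal_nonneg 0 1 x)

lemma abs_integral_Iic_mul_gaussianPDFReal_le (hk : Continuous k) (hK : ∀ x, |k x| ≤ K)
    (hk_mean : ∫ x, k x ∂gaussianReal 0 1 = 0) (w : ℝ) :
    |∫ x in Set.Iic w, k x * φ x| ≤ K * ∫ x in Set.Ioi |w|, φ x := by
  have hint := integrable_mul_gaussianPDFReal hk hK
  rcases le_total 0 w with hw | hw
  · have hsplit : (∫ x in Set.Iic w, k x * φ x) + ∫ x in Set.Ioi w, k x * φ x = 0 := by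
      rw [integral_gaussianReal_eq_integral_smul one_ne_zero] at hk_mean
      rw [intervalIntegral.integral_Iic_add_Ioi hint.integrableOn hint.integrableOn]
      simpa only [smul_eq_mul, mul_comm] using hk_mean
    rw [eq_neg_of_add_eq_zero_left hsplit, abs_neg, abs_of_nonneg hw]
    exact abs_integral_Ioi_mul_gaussianPDFReal_le hK w
  · have hneg : ∫ x in Set.Iic w, k x * φ x = ∫ x in Set.Ioi (-w), k (-x) * φ x := by
      rw [← integral_comp_neg_Iic w fun x ↦ k (-x) * φ x]
      simp only [neg_neg, gaussianPDFReal_zero_one_neg]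
    rw [hneg, abs_of_nonpos hw]
    exact abs_integral_Ioi_mul_gaussianPDFReal_le (fun x ↦ hK (-x)) (-w)

/-- For `k` of Gaussian mean zero, the bounded solution of Stein's equation `g' w - w * g w = k w`
for the standard Gaussian. -/
noncomputable def steinSolution (k : ℝ → ℝ) (w : ℝ) : ℝ :=
  (∫ x in Set.Iic w, k x * φ x) / φ w

lemma hasDerivAt_steinSolution (hk : Continuous k) (hK : ∀ x, |k x| ≤ K) (w : ℝ) :
    HasDerivAt (steinSolution k) (w * steinSolution k w + k w) w := by
  have hint := integrable_mul_gaussianPDFReal hk hK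
  have hcont : Continuous fun x ↦ k x * φ x := hk.mul continuous_gaussianPDFReal_zero_one
  have hprim : HasDerivAt (fun w ↦ ∫ x in Set.Iic w, k x * φ x) (k w * φ w) w := by
    have hsplit (v : ℝ) : ∫ x in Set.Iic v, k x * φ x =
        (∫ x in Set.Iic 0, k x * φ x) + ∫ x in (0 : ℝ)..v, k x * φ x := by
      rw [← intervalIntegral.integral_Iic_sub_Iic hint.integrableOn hint.integrableOn,
        add_sub_cancel]
    rw [funext hsplit]
    exact (hcont.integral_hasStrictDerivAt 0 w).hasDerivAt.const_add _
  have hφ := (gaussianPDFReal_zero_one_pos w).ne'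
  refine (hprim.div (hasDerivAt_gaussianPDFReal_zero_one w) hφ).congr_deriv ?_
  rw [steinSolution]
  field_simp
  ring

lemma continuous_steinSolution (hk : Continuous k) (hK : ∀ x, |k x| ≤ K) :
    Continuous (steinSolution k) :=
  continuous_iff_continuousAt.2 fun w ↦ (hasDerivAt_steinSolution hk hK w).continuousAt

lemma mul_abs_steinSolution_le (hk : Continuous k) (hK : ∀ x, |k x| ≤ K)
    (hk_mean : ∫ x, k x ∂gaussianReal 0 1 = 0) {c w : ℝ} (hc : 0 ≤ c)
    (h : c * ∫ x in Set.Ioi |w|, φ x ≤ φ |w|) : c * |steinSolution k w| ≤ K := by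
  have hφ_abs : φ |w| = φ w := by
    rcases abs_choice w with h | h <;> simp only [h, gaussianPDFReal_zero_one_neg]
  have hφ := gaussianPDFReal_zero_one_pos w
  rw [steinSolution, abs_div, abs_of_pos hφ, ← mul_div_assoc, div_le_iff₀ hφ]
  calc c * |∫ x in Set.Iic w, k x * φ x| ≤ c * (K * ∫ x in Set.Ioi |w|, φ x) :=
        mul_le_mul_of_nonneg_left (abs_integral_Iic_mul_gaussianPDFReal_le hk hK hk_mean w) hc
    _ = K * (c * ∫ x in Set.Ioi |w|, φ x) := mul_left_comm _ _ _
    _ ≤ K * φ w := mul_le_mul_of_nonneg_left (h.trans_eq hφ_abs) ((abs_nonneg _).trans (hK 0))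

lemma abs_steinSolution_le (hk : Continuous k) (hK : ∀ x, |k x| ≤ K)
    (hk_mean : ∫ x, k x ∂gaussianReal 0 1 = 0) (w : ℝ) : |steinSolution k w| ≤ 3 * K := by
  have hthird : (1 / 3 : ℝ) * |steinSolution k w| ≤ K :=
    mul_abs_steinSolution_le hk hK hk_mean (by norm_num)
      (by linarith [integral_Ioi_gaussianPDFReal_le (abs_nonneg w)])
  linarith

lemma abs_mul_steinSolution_add_le (hk : Continuous k) (hK : ∀ x, |k x| ≤ K)
    (hk_mean : ∫ x, k x ∂gaussianReal 0 1 = 0) (w : ℝ) :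
    |w * steinSolution k w + k w| ≤ 2 * K := by
  have hmul : |w * steinSolution k w| ≤ K := by
    rw [abs_mul]
    exact mul_abs_steinSolution_le hk hK hk_mean (abs_nonneg w)
      (mul_integral_Ioi_gaussianPDFReal_le |w|)
  linarith [abs_add_le (w * steinSolution k w) (k w), hK w]

end Gaussian

section TestFunctions

variable {Ω : Type*} [PseudoEMetricSpace Ω] [MeasurableSpace Ω] {ν γ : Measure Ω}
  [IsFiniteMeasure ν] [IsFiniteMeasure γ] {ε : ℝ}

lemma abs_measureReal_sub_le_of_isClosed [OpensMeasurableSpace Ω]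
    (h : ∀ f : Ω → ℝ, Continuous f → (∀ x, f x ∈ Set.Icc 0 1) → |∫ x, f x ∂ν - ∫ x, f x ∂γ| ≤ ε)
    {F : Set Ω} (hF : IsClosed F) : |ν.real F - γ.real F| ≤ ε := by
  have hδ (m : ℕ) : (0 : ℝ) < 1 / ((m : ℝ) + 1) := by positivity
  have hlim (ρ : Measure Ω) [IsFiniteMeasure ρ] :=
    tendsto_integral_thickenedIndicator_of_isClosed ρ hF hδ tendsto_one_div_add_atTop_nhds_zero_nat
  refine le_of_tendsto ((hlim ν).sub (hlim γ)).abs (.of_forall fun m ↦ ?_)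
  exact h _ (by fun_prop) fun x ↦
    ⟨NNReal.coe_nonneg _, mod_cast thickenedIndicator_le_one (hδ m) F x⟩

lemma abs_measureReal_sub_le [BorelSpace Ω]
    (h : ∀ f : Ω → ℝ, Continuous f → (∀ x, f x ∈ Set.Icc 0 1) → |∫ x, f x ∂ν - ∫ x, f x ∂γ| ≤ ε)
    {A : Set Ω} (hA : MeasurableSet A) : |ν.real A - γ.real A| ≤ ε := by
  refine le_of_forall_pos_le_add fun δ hδ ↦ ?_
  obtain ⟨F, hFA, hF, hlt⟩ := hA.exists_isClosed_sdiff_lt (measure_ne_top (ν + γ) A)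
    (ENNReal.ofReal_pos.2 hδ).ne'
  have hrest : ν.real (A \ F) + γ.real (A \ F) < δ := by
    rw [← measureReal_add_apply]
    exact ENNReal.toReal_lt_of_lt_ofReal hlt
  have hsplit (ρ : Measure Ω) [IsFiniteMeasure ρ] : ρ.real A = ρ.real (A \ F) + ρ.real F :=
    eq_add_of_sub_eq (measureReal_sdiff hFA hF.measurableSet).symm
  have hclosed := abs_le.1 (abs_measureReal_sub_le_of_isClosed h hF)
  have hν : 0 ≤ ν.real (A \ F) := measureReal_nonneg
  have hγ : 0 ≤ γ.real (A \ F) := measureReal_nonneg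
  rw [hsplit ν, hsplit γ, abs_le]
  constructor <;> linarith

end TestFunctions

lemma integral_abs_le_of_integral_sq_le {Ω : Type*} [MeasurableSpace Ω] {μ : Measure Ω}
    [IsProbabilityMeasure μ] {f : Ω → ℝ} {c : ℝ} (hf : MemLp f 2 μ) (hc : 0 ≤ c)
    (h : ∫ x, f x ^ 2 ∂μ ≤ c ^ 2) : ∫ x, |f x| ∂μ ≤ c := by
  have hvar := variance_eq_sub hf.abs
  have hnonneg := variance_nonneg |f| μ
  simp only [Pi.pow_apply, Pi.abs_apply, sq_abs] at hvar
  exact abs_le_of_sq_le_sq' (by linarith) hc |>.2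

namespace SO

variable {n j : ℕ} {g g' : ℝ → ℝ}

@[fun_prop]
lemma continuous_powerSumLaplacian (j : ℕ) :
    Continuous fun M : SO n ↦ powerSumLaplacian (powerSum M) j := by
  unfold powerSumLaplacian
  fun_prop

@[fun_prop]
lemma continuous_powerSumGradInner (j k : ℕ) :
    Continuous fun M : SO n ↦ powerSumGradInner (powerSum M) j k := by
  unfold powerSumGradInner
  fun_prop

@[fun_prop]
lemma continuous_powerSumRemainder (j : ℕ) :
    Continuous fun M : SO n ↦ powerSumRemainder n (powerSum M) j := by
  unfold powerSumRemainder
  fun_prop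

/-- The standardised trace `W` of the `j`-th power: `Tr (M ^ j)` has mean `evenIndicator j` and
variance `j` as long as `2 * j < n`. -/
noncomputable def normalizedPowerSum (j : ℕ) (M : SO n) : ℝ :=
  (powerSum M j - evenIndicator j) / Real.sqrt j

@[fun_prop]
lemma continuous_normalizedPowerSum (j : ℕ) :
    Continuous (normalizedPowerSum j : SO n → ℝ) := by
  unfold normalizedPowerSum
  fun_prop

lemma normalizedPowerSum_eq_ite (j : ℕ) (M : SO n) :
    normalizedPowerSum j M =
      if Odd j then trSO M j / Real.sqrt j else (trSO M j - 1) / Real.sqrt j := by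
  rcases Nat.even_or_odd j with h | h
  · simp [normalizedPowerSum, powerSum, evenIndicator, h, Nat.not_odd_iff_even.2 h]
  · simp [normalizedPowerSum, powerSum, evenIndicator, h, Nat.not_even_iff_odd.2 h]

lemma hasPowerSumDeriv_comp_normalizedPowerSum (hg : ∀ w, HasDerivAt g (g' w) w) (j : ℕ) :
    HasPowerSumDeriv (n := n) {j} (fun M ↦ g (normalizedPowerSum j M))
      (fun _ M ↦ g' (normalizedPowerSum j M) / Real.sqrt j) := fun X M ↦ by
  have hW := ((hasLieDeriv_powerSum X j M).sub_const (evenIndicator j : ℝ)).div_const (Real.sqrt j)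
  refine ((hg _).comp 0 hW).congr_deriv ?_
  simp [expSkew_zero, normalizedPowerSum]
  ring

/- The main term comes from `⟨∇p_j, ∇p_j⟩ = j ^ 2 * (n - p_{2j})`. -/
lemma mul_sub_normalizedPowerSum_mul (hj : j ≠ 0) (M : SO n) (a b : ℝ) :
    n * Real.sqrt j * (b - normalizedPowerSum j M * a) =
      (a * powerSumLaplacian (powerSum M) j
        + j * (b / Real.sqrt j) * powerSumGradInner (powerSum M) j j)
        + (a * powerSumRemainder n (powerSum M) j + Real.sqrt j * b * powerSum M (2 * j)) := by
  have hcentered : powerSum M j - evenIndicator j = Real.sqrt j * normalizedPowerSum j M := by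
    have hsqrt : Real.sqrt j ≠ 0 := by positivity
    rw [normalizedPowerSum]
    field_simp
  have hscale : (j : ℝ) * (b / Real.sqrt j) = Real.sqrt j * b := by
    rw [mul_div_left_comm, Real.div_sqrt, mul_comm]
  rw [hscale, powerSumRemainder, hcentered, powerSumGradInner, Nat.dist_self, powerSum_zero,
    ← two_mul]
  ring

section FiniteMeasure

variable {μ : Measure (SO n)} [IsFiniteMeasure μ] [μ.IsMulLeftInvariant]

lemma mul_integral_stein_normalizedPowerSum (hj : j ≠ 0) (hg : ∀ w, HasDerivAt g (g' w) w)
    (hg' : Continuous g') :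
    n * Real.sqrt j * ∫ M, (g' (normalizedPowerSum j M)
        - normalizedPowerSum j M * g (normalizedPowerSum j M)) ∂μ =
      ∫ M, (g (normalizedPowerSum j M) * powerSumRemainder n (powerSum M) j
        + Real.sqrt j * g' (normalizedPowerSum j M) * powerSum M (2 * j)) ∂μ := by
  have hg_cont : Continuous g := continuous_iff_continuousAt.2 fun w ↦ (hg w).continuousAt
  have hgreen := (hasPowerSumDeriv_comp_normalizedPowerSum hg j).integral_eq_zero (μ := μ)
    (by fun_prop) (fun _ _ ↦ by fun_prop) j
  simp only [Finset.sum_singleton] at hgreen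
  rw [← integral_const_mul]
  simp only [mul_sub_normalizedPowerSum_mul hj]
  rw [integral_add (integrable_of_continuous (by fun_prop))
    (integrable_of_continuous (by fun_prop)), hgreen, zero_add]

lemma mul_abs_integral_stein_normalizedPowerSum_le (hj : j ≠ 0)
    (hg : ∀ w, HasDerivAt g (g' w) w) (hg' : Continuous g') {A B : ℝ} (hA : ∀ w, |g w| ≤ A)
    (hB : ∀ w, |g' w| ≤ B) :
    n * Real.sqrt j * |∫ M, (g' (normalizedPowerSum j M)
        - normalizedPowerSum j M * g (normalizedPowerSum j M)) ∂μ| ≤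
      A * ∫ M, |powerSumRemainder n (powerSum M) j| ∂μ
        + Real.sqrt j * B * ∫ M, |powerSum M (2 * j)| ∂μ := by
  rw [← integral_const_mul, ← integral_const_mul, ← integral_add
    (integrable_of_continuous (by fun_prop)) (integrable_of_continuous (by fun_prop)),
    ← abs_of_nonneg (by positivity : 0 ≤ n * Real.sqrt j), ← abs_mul,
    mul_integral_stein_normalizedPowerSum hj hg hg', ← Real.norm_eq_abs]
  refine norm_integral_le_of_norm_le (integrable_of_continuous (by fun_prop))
    (ae_of_all _ fun M ↦ (norm_add_le _ _).trans ?_)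
  simp only [norm_mul, Real.norm_eq_abs, abs_of_nonneg (Real.sqrt_nonneg _)]
  gcongr
  exacts [hA _, hB _]

end FiniteMeasure

variable {μ : Measure (SO n)} [IsProbabilityMeasure μ] [μ.IsMulLeftInvariant]

lemma integral_abs_powerSumRemainder_le (hj : j ≠ 0) (h : 2 * j < n) :
    ∫ M, |powerSumRemainder n (powerSum M) j| ∂μ ≤ j * Real.sqrt j := by
  refine integral_abs_le_of_integral_sq_le (memLp_of_continuous (by fun_prop)) (by positivity) ?_
  have hj1 : (1 : ℝ) ≤ j := mod_cast Nat.one_le_iff_ne_zero.2 hj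
  rw [integral_powerSumRemainder_sq hj h, mul_pow, Real.sq_sqrt j.cast_nonneg]
  nlinarith

lemma integral_abs_powerSum_le (hj : j ≠ 0) (h : 2 * j < n) :
    ∫ M, |powerSum M j| ∂μ ≤ Real.sqrt (j + 1) := by
  refine integral_abs_le_of_integral_sq_le (memLp_of_continuous (by fun_prop)) (by positivity) ?_
  have hmean : (evenIndicator j : ℝ) ≤ 1 := by
    unfold evenIndicator
    split_ifs <;> norm_num
  rw [integral_powerSum_sq hj h, Real.sq_sqrt (by positivity)]
  linarith

theorem abs_integral_stein_normalizedPowerSum_le (hj : j ≠ 0) (h : 4 * j < n)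
    (hg : ∀ w, HasDerivAt g (g' w) w) (hg' : Continuous g') {A B : ℝ} (hA : ∀ w, |g w| ≤ A)
    (hB : ∀ w, |g' w| ≤ B) :
    |∫ M, (g' (normalizedPowerSum j M)
        - normalizedPowerSum j M * g (normalizedPowerSum j M)) ∂μ| ≤ (A + 2 * B) * j / n := by
  have hj1 : (1 : ℝ) ≤ j := mod_cast Nat.one_le_iff_ne_zero.2 hj
  have hn : (0 : ℝ) < n := mod_cast (by lia : 0 < n)
  have hA0 : 0 ≤ A := (abs_nonneg _).trans (hA 0)
  have hB0 : 0 ≤ B := (abs_nonneg _).trans (hB 0)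
  have hsqrt : 1 ≤ Real.sqrt j := Real.one_le_sqrt.2 hj1
  have hsq : Real.sqrt j * Real.sqrt j = j := Real.mul_self_sqrt j.cast_nonneg
  have hremainder := integral_abs_powerSumRemainder_le (μ := μ) hj (by lia)
  have hpowerSum : ∫ M, |powerSum M (2 * j)| ∂μ ≤ 2 * Real.sqrt j := by
    refine (integral_abs_powerSum_le (by lia) (by lia)).trans
      (Real.sqrt_le_iff.2 ⟨by positivity, ?_⟩)
    push_cast
    linarith [mul_pow 2 (Real.sqrt j) 2, Real.sq_sqrt (j.cast_nonneg : (0 : ℝ) ≤ j)]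
  rw [le_div_iff₀ hn]
  refine le_of_mul_le_mul_right ?_ (zero_lt_one.trans_le hsqrt)
  calc _ = n * Real.sqrt j * |∫ M, (g' (normalizedPowerSum j M)
        - normalizedPowerSum j M * g (normalizedPowerSum j M)) ∂μ| := by ring
    _ ≤ A * (j * Real.sqrt j) + Real.sqrt j * B * (2 * Real.sqrt j) :=
      (mul_abs_integral_stein_normalizedPowerSum_le hj hg hg' hA hB).trans (by gcongr)
    _ = A * j * Real.sqrt j + 2 * B * j * 1 := by linear_combination 2 * B * hsq
    _ ≤ A * j * Real.sqrt j + 2 * B * j * Real.sqrt j := by gcongr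
    _ = (A + 2 * B) * j * Real.sqrt j := by ring

lemma abs_integral_comp_normalizedPowerSum_sub_le (hj : j ≠ 0) (h : 4 * j < n) {f : ℝ → ℝ}
    (hf : Continuous f) (hf01 : ∀ x, f x ∈ Set.Icc 0 1) :
    |∫ M, f (normalizedPowerSum j M) ∂μ - ∫ x, f x ∂gaussianReal 0 1| ≤ 7 * j / n := by
  let m := ∫ x, f x ∂gaussianReal 0 1
  have hint : Integrable f (gaussianReal 0 1) := .of_mem_Icc 0 1 hf.aemeasurable (ae_of_all _ hf01)
  have hm : m ∈ Set.Icc 0 1 :=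
    (convex_Icc 0 1).integral_mem isClosed_Icc (ae_of_all _ hf01) hint
  have hk : Continuous fun x ↦ f x - m := by fun_prop
  have hK (x : ℝ) : |f x - m| ≤ 1 := Real.dist_le_of_mem_Icc_01 (hf01 x) hm
  have hk_mean : ∫ x, (f x - m) ∂gaussianReal 0 1 = 0 := by
    simp [integral_sub hint (integrable_const m), m]
  have hstein := abs_integral_stein_normalizedPowerSum_le (μ := μ) hj h
    (hasDerivAt_steinSolution hk hK)
    ((continuous_id.mul (continuous_steinSolution hk hK)).add hk)
    (abs_steinSolution_le hk hK hk_mean) (abs_mul_steinSolution_add_le hk hK hk_mean)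
  have hcenter : ∫ M, (f (normalizedPowerSum j M) - m) ∂μ =
      ∫ M, f (normalizedPowerSum j M) ∂μ - m := by
    rw [integral_sub (integrable_of_continuous (by fun_prop)) (integrable_const m)]
    simp
  simp only [add_sub_cancel_left, hcenter] at hstein
  exact hstein.trans_eq (by ring)

end SO

theorem so_trace_power_clt_general {n j : ℕ} (hn : 0 < n) (hj : 0 < j) (μ : Measure (SO n))
    [IsProbabilityMeasure μ] [μ.IsMulLeftInvariant] {A : Set ℝ} (hA : MeasurableSet A) :
    |μ.real (SO.normalizedPowerSum j ⁻¹' A) - (gaussianReal 0 1).real A| ≤ 7 * j / n := by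
  have hW : Measurable (SO.normalizedPowerSum j : SO n → ℝ) :=
    (SO.continuous_normalizedPowerSum j).measurable
  rcases lt_or_ge (4 * j) n with h | h
  · rw [← map_measureReal_apply hW hA]
    refine abs_measureReal_sub_le (fun f hf hf01 ↦ ?_) hA
    rw [integral_map hW.aemeasurable hf.aestronglyMeasurable]
    exact SO.abs_integral_comp_normalizedPowerSum_sub_le hj.ne' h hf hf01
  · have hle : (n : ℝ) ≤ 4 * j := mod_cast h
    calc |μ.real (SO.normalizedPowerSum j ⁻¹' A) - (gaussianReal 0 1).real A| ≤ 1 :=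
          Real.dist_le_of_mem_Icc_01 ⟨measureReal_nonneg, measureReal_le_one⟩
            ⟨measureReal_nonneg, measureReal_le_one⟩
      _ ≤ 7 * j / n := by
        rw [one_le_div (by positivity)]
        linarith [(j.cast_nonneg : (0 : ℝ) ≤ j)]

/-- CLT with rate `O(j/n)` for traces of powers of Haar-distributed elements of `SO(n,ℝ)`:
there is a universal constant `C > 0` such that for all `n, j ≥ 1`, all `x₀`,
`|P(W ≤ x₀) − Φ(x₀)| ≤ C·j/n`, where `W = Tr(M^j)/√j` (`j` odd) or
`W = (Tr(M^j) − 1)/√j` (`j` even). -/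
theorem so_trace_power_clt :
    ∃ C : ℝ, 0 < C ∧
      ∀ (n j : ℕ), 0 < n → 0 < j →
        ∀ (μ : Measure (SO n)), IsProbabilityMeasure μ → μ.IsHaarMeasure →
          ∀ x₀ : ℝ,
            |(μ {M : SO n |
                (if Odd j then trSO M j / Real.sqrt j
                 else (trSO M j - 1) / Real.sqrt j) ≤ x₀}).toReal - Phi x₀|
              ≤ C * j / n := by
  refine ⟨7, by norm_num, fun n j hn hj μ hμ _ x₀ ↦ ?_⟩
  simp only [← SO.normalizedPowerSum_eq_ite, Phi_eq_gaussianReal_real_Iic]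
  exact so_trace_power_clt_general hn hj μ measurableSet_Iic
end

section
/- For all positive integers n and j, let M be distributed according to the Haar probability measure on U(n,ℂ), and set W = (Tr(M^j) + conj(Tr(M^j)))/√(2j), a real random variable. Then for every real x₀, |P(W ≤ x₀) − Φ(x₀)| ≤ 22·j/n. -/
open MeasureTheory ProbabilityTheory Matrix

/-- The trace of the `k`-th power (`k : ℤ`, negative powers via the inverse) of an
element of the unitary group `U(n,ℂ)`. -/
noncomputable def trU {n : ℕ} (M : Matrix.unitaryGroup (Fin n) ℂ) (k : ℤ) : ℂ :=
  Matrix.trace (((M ^ k : Matrix.unitaryGroup (Fin n) ℂ)) : Matrix (Fin n) (Fin n) ℂ)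

/-!
Write `p_k` for the trace of the `k`-th power on `U(n, ℂ)` and `W = (p_j + conj p_j) / √(2j)`.
Stein's method reduces the distance between the law of `W` and the standard Gaussian to bounds for
`E[f'(W) - W f(W)]` with `f` and `f'` bounded.

Invariance of the measure under the one-parameter subgroups `t ↦ exp (t X)` is an integration by
parts formula. By complex linearity it holds for all matrices `X`, and summing over the matrix units
gives the loop equations
`n E[p_k G] + ∑_{0 < i < k} E[p_i p_{k-i} G] + E[trace (M^k ∇G)] = 0`.

For `k = j` and `G = f(W)` the main terms of the loop equation form `n E[f'(W) - W f(W)]`, and the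
rest is `E[f'(W) Re p_{2j}] + 2 / √(2j) * E[f(W) Re ∑ p_i p_{j-i}]`. For `G = p_s conj p_k` the loop
equations are a recursion for `E[p_s conj p_k]`, in which the parts of the partition `s` are cut and
joined; in degree `k ≤ n` the diagonal term dominates the cuts and joins, so the recursion has only
the Gaussian solution. Second moments of the remaining terms follow when `2j ≤ n`, and the bound is
trivial when `2j > n`.
-/

namespace UnitaryTrace

section TotalVariation

open Filter Topology

variable {α : Type*} [PseudoEMetricSpace α] [MeasurableSpace α] [BorelSpace α]
  {ν₁ ν₂ : Measure α} [IsFiniteMeasure ν₁] [IsFiniteMeasure ν₂] {B : ℝ}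

lemma abs_measureReal_sub_le_of_isClosed
    (h : ∀ g : α → ℝ, Continuous g → (∀ x, 0 ≤ g x) → (∀ x, g x ≤ 1) →
      |∫ x, g x ∂ν₁ - ∫ x, g x ∂ν₂| ≤ B)
    {F : Set α} (hF : IsClosed F) : |ν₁.real F - ν₂.real F| ≤ B := by
  have hδ (m : ℕ) : (0 : ℝ) < 1 / (m + 1) := by positivity
  have hlim (ν : Measure α) [IsFiniteMeasure ν] :
      Tendsto (fun m ↦ ∫ x, (thickenedIndicator (hδ m) F x : ℝ) ∂ν) atTop (𝓝 (ν.real F)) :=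
    tendsto_integral_thickenedIndicator_of_isClosed ν hF hδ tendsto_one_div_add_atTop_nhds_zero_nat
  refine le_of_tendsto ((hlim ν₁).sub (hlim ν₂)).abs (Eventually.of_forall fun m ↦ ?_)
  exact h _ (by fun_prop) (fun x ↦ NNReal.coe_nonneg _)
    fun x ↦ mod_cast thickenedIndicator_le_one (hδ m) F x

theorem abs_measureReal_sub_le_of_forall_continuous
    (h : ∀ g : α → ℝ, Continuous g → (∀ x, 0 ≤ g x) → (∀ x, g x ≤ 1) →
      |∫ x, g x ∂ν₁ - ∫ x, g x ∂ν₂| ≤ B)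
    {A : Set α} (hA : MeasurableSet A) : |ν₁.real A - ν₂.real A| ≤ B := by
  refine le_of_forall_pos_le_add fun ε hε ↦ ?_
  obtain ⟨F, hFA, hF, hlt⟩ := hA.exists_isClosed_sdiff_lt (μ := ν₁ + ν₂) (by finiteness)
    (ENNReal.ofReal_pos.2 hε).ne'
  have hsmall : (ν₁ + ν₂).real (A \ F) ≤ ε := ENNReal.toReal_le_of_le_ofReal hε.le hlt.le
  rw [measureReal_add_apply] at hsmall
  have hclosed := abs_le.1 (abs_measureReal_sub_le_of_isClosed h hF)
  have h₁ := measureReal_sdiff_add_inter (μ := ν₁) (s := A) hF.measurableSet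
  have h₂ := measureReal_sdiff_add_inter (μ := ν₂) (s := A) hF.measurableSet
  rw [Set.inter_eq_right.2 hFA] at h₁ h₂
  have hnonneg₁ := measureReal_nonneg (μ := ν₁) (s := A \ F)
  have hnonneg₂ := measureReal_nonneg (μ := ν₂) (s := A \ F)
  exact abs_le.2 ⟨by linarith, by linarith⟩

end TotalVariation

section Stein

open Filter Topology Real

local notation "φ" => gaussianPDFReal 0 1

lemma gaussianPDFReal_zero_one_apply (x : ℝ) : φ x = (√(2 * π))⁻¹ * rexp (-x ^ 2 / 2) := by
  simp [gaussianPDFReal]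

lemma gaussianPDFReal_zero_one_pos (x : ℝ) : 0 < φ x :=
  gaussianPDFReal_pos 0 1 x one_ne_zero

lemma gaussianPDFReal_zero_one_abs (x : ℝ) : φ |x| = φ x := by
  simp [gaussianPDFReal_zero_one_apply]

lemma hasDerivAt_gaussianPDFReal_zero_one (x : ℝ) : HasDerivAt φ (-(x * φ x)) x := by
  have h : HasDerivAt (fun y : ℝ ↦ -y ^ 2 / 2) (-x) x := by
    convert! ((hasDerivAt_pow 2 x).neg.div_const 2) using 1
    ring
  rw [funext gaussianPDFReal_zero_one_apply]
  convert! h.exp.const_mul (√(2 * π))⁻¹ using 1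
  ring

lemma gaussianPDFReal_zero_one_eq_mul_exp (x t : ℝ) :
    φ t = φ x * (rexp (-x * (t - x)) * rexp (-(t - x) ^ 2 / 2)) := by
  rw [gaussianPDFReal_zero_one_apply, gaussianPDFReal_zero_one_apply, mul_assoc, ← exp_add,
    ← exp_add]
  ring_nf

lemma setIntegral_Ioi_gaussianPDFReal_le {x : ℝ} (hx : 0 ≤ x) :
    ∫ t in Set.Ioi x, φ t ≤ √(2 * π) * φ x := by
  have hint : Integrable (fun t ↦ √(2 * π) * φ x * φ (t - x)) :=
    ((integrable_gaussianPDFReal 0 1).comp_sub_right x).const_mul _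
  calc ∫ t in Set.Ioi x, φ t
      ≤ ∫ t in Set.Ioi x, √(2 * π) * φ x * φ (t - x) := by
        refine setIntegral_mono_on (integrable_gaussianPDFReal 0 1).integrableOn
          hint.integrableOn measurableSet_Ioi fun t ht ↦ ?_
        have hexp : rexp (-x * (t - x)) ≤ 1 := by
          rw [exp_le_one_iff]
          nlinarith [Set.mem_Ioi.1 ht]
        rw [gaussianPDFReal_zero_one_eq_mul_exp x t, gaussianPDFReal_zero_one_apply (t - x),
          mul_right_comm, mul_inv_cancel_left₀ (by positivity), mul_comm (φ x)]
        gcongr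
        · exact (gaussianPDFReal_zero_one_pos x).le
        · exact mul_le_of_le_one_left (exp_pos _).le hexp
    _ ≤ ∫ t, √(2 * π) * φ x * φ (t - x) :=
        setIntegral_le_integral hint (Eventually.of_forall fun t ↦ by
          have := gaussianPDFReal_zero_one_pos
          positivity [this x, this (t - x)])
    _ = √(2 * π) * φ x := by
        rw [integral_const_mul, integral_sub_right_eq_self φ x,
          integral_gaussianPDFReal_eq_one 0 one_ne_zero, mul_one]

lemma mul_setIntegral_Ioi_gaussianPDFReal_le {x : ℝ} (hx : 0 ≤ x) :
    x * ∫ t in Set.Ioi x, φ t ≤ φ x := by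
  rcases hx.eq_or_lt with rfl | hx
  · simpa using (gaussianPDFReal_zero_one_pos 0).le
  calc x * ∫ t in Set.Ioi x, φ t
      ≤ x * ∫ t in Set.Ioi x, φ x * (rexp (x * x) * rexp (-x * t)) := by
        refine mul_le_mul_of_nonneg_left (integral_mono
          (integrable_gaussianPDFReal 0 1).integrableOn
          (((integrableOn_exp_mul_Ioi (neg_lt_zero.2 hx) x).const_mul _).const_mul _)
          fun t ↦ ?_) hx.le
        beta_reduce
        rw [gaussianPDFReal_zero_one_eq_mul_exp x t, ← exp_add, ← exp_add]
        refine mul_le_mul_of_nonneg_left (exp_le_exp.2 ?_) (gaussianPDFReal_zero_one_pos x).le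
        nlinarith [sq_nonneg (t - x)]
    _ = φ x := by
        rw [integral_const_mul, integral_const_mul, integral_exp_mul_Ioi (neg_lt_zero.2 hx) x,
          neg_div_neg_eq, neg_mul, Real.exp_neg]
        field_simp

lemma hasDerivAt_setIntegral_Iic {E : Type*} [NormedAddCommGroup E] [NormedSpace ℝ E]
    [CompleteSpace E] {v : ℝ → E} (hv : Continuous v) (hint : Integrable v) (x : ℝ) :
    HasDerivAt (fun y ↦ ∫ t in Set.Iic y, v t) (v x) x := by
  have hsplit : (fun y ↦ ∫ t in Set.Iic y, v t) =
      fun y ↦ (∫ t in Set.Iic x, v t) + ∫ t in x..y, v t := by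
    funext y
    rw [← intervalIntegral.integral_Iic_sub_Iic hint.integrableOn hint.integrableOn,
      add_sub_cancel]
  rw [hsplit]
  exact (hv.integral_hasStrictDerivAt x x).hasDerivAt.const_add _

/-- For bounded `u` of mean zero under the standard Gaussian, the bounded solution `f` of Stein's
equation `f' x - x * f x = u x`. -/
noncomputable def steinSolution (u : ℝ → ℝ) (x : ℝ) : ℝ :=
  (φ x)⁻¹ * ∫ t in Set.Iic x, u t * φ t

variable {u : ℝ → ℝ} {B : ℝ}

lemma hasDerivAt_steinSolution (hu : Continuous u) (hint : Integrable fun t ↦ u t * φ t) (x : ℝ) :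
    HasDerivAt (steinSolution u) (x * steinSolution u x + u x) x := by
  have hφ : Continuous φ :=
    continuous_iff_continuousAt.2 fun y ↦ (hasDerivAt_gaussianPDFReal_zero_one y).continuousAt
  have hne := (gaussianPDFReal_zero_one_pos x).ne'
  convert! ((hasDerivAt_gaussianPDFReal_zero_one x).fun_inv hne).fun_mul
    (hasDerivAt_setIntegral_Iic (v := fun t ↦ u t * φ t) (by fun_prop) hint x) using 1
  simp only [steinSolution]
  field_simp

lemma integrable_mul_gaussianPDFReal (hu : Continuous u) (hB : ∀ x, |u x| ≤ B) :
    Integrable fun t ↦ u t * φ t :=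
  (integrable_gaussianPDFReal 0 1).bdd_mul hu.aestronglyMeasurable (Eventually.of_forall hB)

lemma abs_setIntegral_mul_gaussianPDFReal_le (hB : ∀ x, |u x| ≤ B) (s : Set ℝ) :
    |∫ t in s, u t * φ t| ≤ B * ∫ t in s, φ t := by
  rw [← integral_const_mul, ← norm_eq_abs]
  refine norm_integral_le_of_norm_le ((integrable_gaussianPDFReal 0 1).const_mul B).integrableOn
    (Eventually.of_forall fun t ↦ ?_)
  rw [norm_mul, norm_of_nonneg (gaussianPDFReal_zero_one_pos t).le]
  exact mul_le_mul_of_nonneg_right (hB t) (gaussianPDFReal_zero_one_pos t).le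

lemma abs_setIntegral_Iic_mul_gaussianPDFReal_le (hu : Continuous u) (hB : ∀ x, |u x| ≤ B)
    (hmean : ∫ t, u t * φ t = 0) (x : ℝ) :
    |∫ t in Set.Iic x, u t * φ t| ≤ B * ∫ t in Set.Ioi |x|, φ t := by
  rcases le_total 0 x with hx | hx
  · have hint := integrable_mul_gaussianPDFReal hu hB
    have hsplit :=
      intervalIntegral.integral_Iic_add_Ioi (b := x) hint.integrableOn hint.integrableOn
    rw [hmean] at hsplit
    rw [eq_neg_of_add_eq_zero_left hsplit, abs_neg, abs_of_nonneg hx]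
    exact abs_setIntegral_mul_gaussianPDFReal_le hB _
  · have hsymm : ∫ t in Set.Ioi (-x), φ t = ∫ t in Set.Iic x, φ t := by
      rw [← integral_comp_neg_Iic]
      simp [gaussianPDFReal_zero_one_apply]
    rw [abs_of_nonpos hx, hsymm]
    exact abs_setIntegral_mul_gaussianPDFReal_le hB _

lemma abs_steinSolution_le (hu : Continuous u) (hB : ∀ x, |u x| ≤ B)
    (hmean : ∫ t, u t * φ t = 0) (x : ℝ) : |steinSolution u x| ≤ B * √(2 * π) := by
  have hB₀ : 0 ≤ B := (abs_nonneg _).trans (hB 0)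
  have hφ := gaussianPDFReal_zero_one_pos x
  rw [steinSolution, abs_mul, abs_inv, abs_of_pos hφ, inv_mul_le_iff₀ hφ]
  calc |∫ t in Set.Iic x, u t * φ t|
      ≤ B * ∫ t in Set.Ioi |x|, φ t := abs_setIntegral_Iic_mul_gaussianPDFReal_le hu hB hmean x
    _ ≤ B * (√(2 * π) * φ |x|) := by
        gcongr
        exact setIntegral_Ioi_gaussianPDFReal_le (abs_nonneg x)
    _ = φ x * (B * √(2 * π)) := by rw [gaussianPDFReal_zero_one_abs]; ring

lemma abs_mul_steinSolution_le (hu : Continuous u) (hB : ∀ x, |u x| ≤ B)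
    (hmean : ∫ t, u t * φ t = 0) (x : ℝ) : |x * steinSolution u x| ≤ B := by
  have hB₀ : 0 ≤ B := (abs_nonneg _).trans (hB 0)
  have hφ := gaussianPDFReal_zero_one_pos x
  rw [steinSolution, mul_left_comm, abs_mul, abs_mul, abs_inv, abs_of_pos hφ, inv_mul_le_iff₀ hφ]
  calc |x| * |∫ t in Set.Iic x, u t * φ t|
      ≤ |x| * (B * ∫ t in Set.Ioi |x|, φ t) := by
        gcongr
        exact abs_setIntegral_Iic_mul_gaussianPDFReal_le hu hB hmean x
    _ = B * (|x| * ∫ t in Set.Ioi |x|, φ t) := by ring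
    _ ≤ B * φ |x| := by
        gcongr
        exact mul_setIntegral_Ioi_gaussianPDFReal_le (abs_nonneg x)
    _ = φ x * B := by rw [gaussianPDFReal_zero_one_abs, mul_comm]

lemma integral_sub_integral_mul_gaussianPDFReal {g : ℝ → ℝ}
    (hg : Integrable fun t ↦ g t * φ t) :
    ∫ t, (g t - ∫ y, g y ∂gaussianReal 0 1) * φ t = 0 := by
  have hmean : ∫ y, g y ∂gaussianReal 0 1 = ∫ t, g t * φ t := by
    simp only [integral_gaussianReal_eq_integral_smul one_ne_zero, smul_eq_mul, mul_comm]
  simp only [sub_mul]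
  rw [integral_sub hg ((integrable_gaussianPDFReal 0 1).const_mul _), integral_const_mul,
    integral_gaussianPDFReal_eq_one 0 one_ne_zero, hmean, mul_one, sub_self]

theorem exists_hasDerivAt_sub_mul_eq_sub_integral_gaussianReal {g : ℝ → ℝ} (hg : Continuous g)
    (h₀ : ∀ x, 0 ≤ g x) (h₁ : ∀ x, g x ≤ 1) :
    ∃ f f' : ℝ → ℝ, Continuous f' ∧ (∀ x, HasDerivAt f (f' x) x) ∧ (∀ x, |f x| ≤ √(2 * π)) ∧
      (∀ x, |f' x| ≤ 2) ∧ ∀ x, f' x - x * f x = g x - ∫ y, g y ∂gaussianReal 0 1 := by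
  set u : ℝ → ℝ := fun x ↦ g x - ∫ y, g y ∂gaussianReal 0 1
  have hg_abs (x : ℝ) : |g x| ≤ 1 := abs_le.2 ⟨by linarith [h₀ x], h₁ x⟩
  have hmean_nonneg : 0 ≤ ∫ y, g y ∂gaussianReal 0 1 := integral_nonneg h₀
  have hmean_le : ∫ y, g y ∂gaussianReal 0 1 ≤ 1 := by
    refine le_of_abs_le ?_
    simpa using norm_integral_le_of_norm_le_const (μ := gaussianReal 0 1) (f := g)
      (Eventually.of_forall hg_abs)
  have hu_abs (x : ℝ) : |u x| ≤ 1 := abs_le.2 ⟨by linarith [h₀ x], by linarith [h₁ x]⟩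
  have hu : Continuous u := by fun_prop
  have hderiv := hasDerivAt_steinSolution hu (integrable_mul_gaussianPDFReal hu hu_abs)
  have hmean : ∫ t, u t * φ t = 0 :=
    integral_sub_integral_mul_gaussianPDFReal (integrable_mul_gaussianPDFReal hg hg_abs)
  have hcont : Continuous (steinSolution u) :=
    continuous_iff_continuousAt.2 fun x ↦ (hderiv x).continuousAt
  refine ⟨steinSolution u, fun x ↦ x * steinSolution u x + u x, by fun_prop, hderiv,
    fun x ↦ by simpa using abs_steinSolution_le hu hu_abs hmean x, fun x ↦ ?_, fun x ↦ by ring⟩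
  calc |x * steinSolution u x + u x|
      ≤ |x * steinSolution u x| + |u x| := abs_add_le _ _
    _ ≤ 1 + 1 := add_le_add (abs_mul_steinSolution_le hu hu_abs hmean x) (hu_abs x)
    _ = 2 := one_add_one_eq_two

theorem abs_measureReal_sub_gaussianReal_le_of_stein {ν : Measure ℝ} [IsProbabilityMeasure ν]
    (h : ∀ f f' : ℝ → ℝ, Continuous f' → (∀ x, HasDerivAt f (f' x) x) →
      (∀ x, |f x| ≤ √(2 * π)) → (∀ x, |f' x| ≤ 2) → |∫ x, (f' x - x * f x) ∂ν| ≤ B)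
    {A : Set ℝ} (hA : MeasurableSet A) : |ν.real A - (gaussianReal 0 1).real A| ≤ B := by
  refine abs_measureReal_sub_le_of_forall_continuous (fun g hg h₀ h₁ ↦ ?_) hA
  obtain ⟨f, f', hf', hderiv, hf_le, hf'_le, hstein⟩ :=
    exists_hasDerivAt_sub_mul_eq_sub_integral_gaussianReal hg h₀ h₁
  have hint : Integrable g ν := Integrable.of_bound hg.aestronglyMeasurable 1
    (Eventually.of_forall fun x ↦ abs_le.2 ⟨by linarith [h₀ x], h₁ x⟩)
  have hbound := h f f' hf' hderiv hf_le hf'_le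
  simp only [hstein] at hbound
  rwa [integral_sub hint (integrable_const _), integral_const, probReal_univ, one_smul] at hbound

lemma Phi_eq_gaussianReal_Iic (x₀ : ℝ) : Phi x₀ = (gaussianReal 0 1).real (Set.Iic x₀) := by
  rw [measureReal_def, gaussianReal_apply_eq_integral 0 one_ne_zero, ENNReal.toReal_ofReal
    (integral_nonneg fun x ↦ gaussianPDFReal_nonneg _ _ _), Phi, ← integral_const_mul]
  simp only [gaussianPDFReal_zero_one_apply]

end Stein

section Topology

instance {m n : Type*} [Countable m] [Countable n] : BorelSpace (Matrix m n ℂ) :=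
  inferInstanceAs (BorelSpace (m → n → ℂ))

variable {ι : Type*} [Fintype ι] [DecidableEq ι]

instance : BorelSpace (unitaryGroup ι ℂ) := Subtype.borelSpace _

instance : CompactSpace (unitaryGroup ι ℂ) := by
  have hball : IsCompact (Set.univ.pi fun _ : ι ↦ Set.univ.pi fun _ : ι ↦
      Metric.closedBall (0 : ℂ) 1) :=
    isCompact_univ_pi fun _ ↦ isCompact_univ_pi fun _ ↦ isCompact_closedBall _ _
  refine isCompact_iff_compactSpace.1 (IsCompact.of_isClosed_subset (X := Matrix ι ι ℂ) hball ?_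
    fun U hU a _ b _ ↦ by simpa using entry_norm_bound_of_unitary hU a b)
  have hset : (unitaryGroup ι ℂ : Set (Matrix ι ι ℂ)) = {U | U * star U = 1} :=
    Set.ext fun U ↦ mem_unitaryGroup_iff
  exact hset ▸ isClosed_eq (by fun_prop) continuous_const

end Topology

section OneParameterSubgroup

variable {ι : Type*} [Fintype ι] [DecidableEq ι]

lemma exp_smul_mem_unitaryGroup (X : skewAdjoint (Matrix ι ι ℂ)) (t : ℝ) :
    NormedSpace.exp (t • (X : Matrix ι ι ℂ)) ∈ unitaryGroup ι ℂ := by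
  have hstar : (t • (X : Matrix ι ι ℂ))ᴴ = -(t • (X : Matrix ι ι ℂ)) :=
    skewAdjoint.mem_iff.1 (skewAdjoint.smul_mem t X.2)
  rw [mem_unitaryGroup_iff', star_eq_conjTranspose, ← exp_conjTranspose, hstar,
    ← exp_add_of_commute _ _ (Commute.refl (t • X.1)).neg_left, neg_add_cancel,
    NormedSpace.exp_zero]

/-- The one-parameter subgroup `t ↦ exp (t X)` of the unitary group generated by a skew-adjoint
matrix `X`. -/
noncomputable def expUnitary (X : skewAdjoint (Matrix ι ι ℂ)) (t : ℝ) : unitaryGroup ι ℂ :=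
  ⟨NormedSpace.exp (t • (X : Matrix ι ι ℂ)), exp_smul_mem_unitaryGroup X t⟩

variable (X : skewAdjoint (Matrix ι ι ℂ)) (M : unitaryGroup ι ℂ)

lemma expUnitary_zero : expUnitary X 0 = 1 := by
  ext1
  simp [expUnitary]

lemma expUnitary_add (s t : ℝ) : expUnitary X (s + t) = expUnitary X s * expUnitary X t := by
  refine Subtype.ext ((congrArg NormedSpace.exp (add_smul s t X.1)).trans ?_)
  exact exp_add_of_commute _ _ (((Commute.refl X.1).smul_left s).smul_right t)

open scoped Matrix.Norms.Operator in
lemma hasDerivAt_expUnitary_mul_pow_apply (k : ℕ) (a b : ι) :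
    HasDerivAt (fun t ↦ ((expUnitary X t * M : unitaryGroup ι ℂ).1 ^ k) a b)
      ((∑ i ∈ Finset.range k, M.1 ^ (k - 1 - i) * (X * M.1) * M.1 ^ i) a b) 0 := by
  have hmul : HasDerivAt (fun t : ℝ ↦ NormedSpace.exp (t • X.1) * M.1) (X * M.1) 0 := by
    have h := (hasDerivAt_exp_smul_const' X.1 (0 : ℝ)).mul_const M.1
    rwa [zero_smul, NormedSpace.exp_zero, mul_one] at h
  have hpow := hmul.fun_pow' k
  simp only [zero_smul, NormedSpace.exp_zero, one_mul, Nat.pred_eq_sub_one] at hpow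
  exact (entryLinearMap ℝ ℂ a b).toContinuousLinearMap.hasFDerivAt.comp_hasDerivAt (0 : ℝ) hpow

end OneParameterSubgroup

section Gradient

lemma star_trace_skewAdjoint_mul {n : Type*} [Fintype n] (X : skewAdjoint (Matrix n n ℂ))
    (Y : Matrix n n ℂ) :
    star (trace (X.1 * Y)) = -trace (X.1 * star Y) := by
  have hX : (X.1)ᴴ = -X.1 := skewAdjoint.mem_iff.1 X.2
  rw [← trace_conjTranspose, conjTranspose_mul, hX, trace_mul_comm, Matrix.neg_mul, trace_neg,
    star_eq_conjTranspose]

variable {ι : Type*} [Fintype ι] [DecidableEq ι] {G G₁ G₂ : unitaryGroup ι ℂ → ℂ}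
  {H H₁ H₂ : unitaryGroup ι ℂ → Matrix ι ι ℂ}

/-- `H` represents the derivative of `G` along left translations by one-parameter subgroups through
the bilinear pairing `(X, Y) ↦ trace (X * Y)`; both functions are required to be continuous. -/
structure HasContinuousGradient (G : unitaryGroup ι ℂ → ℂ)
    (H : unitaryGroup ι ℂ → Matrix ι ι ℂ) : Prop where
  continuous : Continuous G
  continuous_gradient : Continuous H
  hasDerivAt (X : skewAdjoint (Matrix ι ι ℂ)) (M : unitaryGroup ι ℂ) :
    HasDerivAt (fun t ↦ G (expUnitary X t * M)) (trace (X.1 * H M)) 0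

namespace HasContinuousGradient

lemma const (c : ℂ) : HasContinuousGradient (fun _ : unitaryGroup ι ℂ ↦ c) (fun _ ↦ 0) where
  continuous := continuous_const
  continuous_gradient := continuous_const
  hasDerivAt _ _ := by simpa using hasDerivAt_const (0 : ℝ) c

lemma mul (h₁ : HasContinuousGradient G₁ H₁) (h₂ : HasContinuousGradient G₂ H₂) :
    HasContinuousGradient (fun M ↦ G₁ M * G₂ M) (fun M ↦ G₂ M • H₁ M + G₁ M • H₂ M) where
  continuous := h₁.continuous.mul h₂.continuous
  continuous_gradient :=
    (h₂.continuous.smul h₁.continuous_gradient).add (h₁.continuous.smul h₂.continuous_gradient)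
  hasDerivAt X M := by
    convert! (h₁.hasDerivAt X M).mul (h₂.hasDerivAt X M) using 1
    simp [mul_add, expUnitary_zero, mul_comm]

lemma sum {κ : Type*} {s : Finset κ} {G : κ → unitaryGroup ι ℂ → ℂ}
    {H : κ → unitaryGroup ι ℂ → Matrix ι ι ℂ} (h : ∀ a ∈ s, HasContinuousGradient (G a) (H a)) :
    HasContinuousGradient (fun M ↦ ∑ a ∈ s, G a M) (fun M ↦ ∑ a ∈ s, H a M) where
  continuous := continuous_finsetSum s fun a ha ↦ (h a ha).continuous
  continuous_gradient := continuous_finsetSum s fun a ha ↦ (h a ha).continuous_gradient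
  hasDerivAt X M := by
    rw [Finset.mul_sum, trace_sum]
    exact HasDerivAt.fun_sum fun a ha ↦ (h a ha).hasDerivAt X M

lemma conj (h : HasContinuousGradient G H) :
    HasContinuousGradient (fun M ↦ star (G M)) (fun M ↦ -star (H M)) where
  continuous := h.continuous.star
  continuous_gradient := h.continuous_gradient.star.neg
  hasDerivAt X M := by
    convert! (h.hasDerivAt X M).star using 1
    rw [star_trace_skewAdjoint_mul, Matrix.mul_neg, trace_neg]

lemma comp_re (h : HasContinuousGradient G H) {f f' : ℝ → ℝ} (hf' : Continuous f')
    (hf : ∀ x, HasDerivAt f (f' x) x) :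
    HasContinuousGradient (fun M ↦ (f (G M).re : ℂ))
      (fun M ↦ (f' (G M).re / 2 : ℂ) • (H M - star (H M))) where
  continuous := by
    have hf_cont : Continuous f := continuous_iff_continuousAt.2 fun x ↦ (hf x).continuousAt
    have := h.continuous
    fun_prop
  continuous_gradient := by
    have := h.continuous
    have := h.continuous_gradient
    fun_prop
  hasDerivAt X M := by
    have hre : HasDerivAt (fun t ↦ (G (expUnitary X t * M)).re) (trace (X.1 * H M)).re 0 :=
      Complex.reCLM.hasFDerivAt.comp_hasDerivAt 0 (h.hasDerivAt X M)
    have hcomp := (hf (G (expUnitary X 0 * M)).re).comp (0 : ℝ) hre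
    convert! hcomp.ofReal_comp using 1
    rw [Matrix.mul_smul, trace_smul, Matrix.mul_sub, trace_sub, ← neg_neg (trace (X.1 * star _)),
      ← star_trace_skewAdjoint_mul, expUnitary_zero, one_mul, smul_eq_mul, Complex.ofReal_mul,
      Complex.re_eq_add_conj, sub_neg_eq_add, Complex.star_def]
    ring

lemma pow_apply (k : ℕ) (a b : ι) :
    HasContinuousGradient (fun M : unitaryGroup ι ℂ ↦ (M.1 ^ k) a b)
      (fun M ↦ ∑ i ∈ Finset.range k, M.1 ^ (i + 1) * single b a 1 * M.1 ^ (k - 1 - i)) where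
  continuous := by fun_prop
  continuous_gradient := by fun_prop
  hasDerivAt X M := by
    convert! hasDerivAt_expUnitary_mul_pow_apply X M k a b using 1
    rw [Finset.mul_sum, trace_sum, Matrix.sum_apply]
    refine Finset.sum_congr rfl fun i _ ↦ ?_
    rw [← mul_assoc, trace_mul_comm, ← mul_assoc, ← mul_assoc, trace_mul_single, pow_succ']
    simp [mul_assoc]

end HasContinuousGradient

/-- The power sum `p_k` of the eigenvalues, i.e. the trace of the `k`-th power. -/
noncomputable def powTrace (k : ℕ) (M : unitaryGroup ι ℂ) : ℂ := trace (M.1 ^ k)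

lemma powTrace_zero (M : unitaryGroup ι ℂ) : powTrace 0 M = Fintype.card ι := by
  simp [powTrace]

@[fun_prop]
lemma continuous_powTrace (k : ℕ) : Continuous (powTrace k : unitaryGroup ι ℂ → ℂ) := by
  unfold powTrace
  fun_prop

lemma hasContinuousGradient_powTrace (k : ℕ) :
    HasContinuousGradient (powTrace k : unitaryGroup ι ℂ → ℂ) (fun M ↦ (k : ℂ) • M.1 ^ k) := by
  convert! HasContinuousGradient.sum (s := Finset.univ)
    fun a _ ↦ HasContinuousGradient.pow_apply (ι := ι) k a a using 1
  funext M
  rw [Finset.sum_comm]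
  simp_rw [← Finset.sum_mul, ← Finset.mul_sum, sum_single_one]
  have hpow : ∀ i ∈ Finset.range k, M.1 ^ (i + 1) * 1 * M.1 ^ (k - 1 - i) = M.1 ^ k := by
    intro i hi
    rw [mul_one, ← pow_add]
    congr 1
    grind
  rw [Finset.sum_congr rfl hpow, Finset.sum_const, Finset.card_range, Nat.cast_smul_eq_nsmul]

end Gradient

section IntegrationByParts

variable {ι : Type*} [Fintype ι] [DecidableEq ι] {G : unitaryGroup ι ℂ → ℂ}
  {H : unitaryGroup ι ℂ → Matrix ι ι ℂ}

lemma integrable_of_continuous {α E : Type*} [TopologicalSpace α] [CompactSpace α]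
    [MeasurableSpace α] [OpensMeasurableSpace α] {μ : Measure α} [IsFiniteMeasure μ]
    [NormedAddCommGroup E] {F : α → E} (hF : Continuous F) :
    Integrable F μ :=
  hF.integrable_of_hasCompactSupport (.of_compactSpace F)

lemma HasContinuousGradient.hasDerivAt_expUnitary_mul (h : HasContinuousGradient G H)
    (X : skewAdjoint (Matrix ι ι ℂ)) (M : unitaryGroup ι ℂ) (t : ℝ) :
    HasDerivAt (fun s ↦ G (expUnitary X s * M)) (trace (X.1 * H (expUnitary X t * M))) t := by
  have hshift : (fun s ↦ G (expUnitary X s * M)) =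
      fun s ↦ G (expUnitary X (s - t) * (expUnitary X t * M)) := by
    funext s
    rw [← mul_assoc, ← expUnitary_add, sub_add_cancel]
  rw [hshift]
  have h₀ := h.hasDerivAt X (expUnitary X t * M)
  rw [← sub_self t] at h₀
  exact h₀.comp_sub_const t t

variable {μ : Measure (unitaryGroup ι ℂ)} [IsFiniteMeasure μ] [μ.IsMulLeftInvariant]

lemma HasContinuousGradient.integral_trace_skewAdjoint_mul_eq_zero
    (h : HasContinuousGradient G H) (X : skewAdjoint (Matrix ι ι ℂ)) :
    ∫ M, trace (X.1 * H M) ∂μ = 0 := by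
  have hG := h.continuous
  have hH := h.continuous_gradient
  have hderiv : Continuous fun M ↦ trace (X.1 * H M) := by fun_prop
  obtain ⟨C, hC⟩ := (isCompact_range hderiv).isBounded.exists_norm_le
  have hint (t : ℝ) : Integrable (fun M ↦ G (expUnitary X t * M)) μ :=
    integrable_of_continuous (by fun_prop)
  have hdiff := (hasDerivAt_integral_of_dominated_loc_of_deriv_le (μ := μ) (x₀ := (0 : ℝ))
    (F := fun t M ↦ G (expUnitary X t * M)) (bound := fun _ ↦ C) Filter.univ_mem
    (Filter.Eventually.of_forall fun t ↦ (hint t).aestronglyMeasurable) (hint 0)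
    (F' := fun t M ↦ trace (X.1 * H (expUnitary X t * M)))
    (integrable_of_continuous (by fun_prop)).aestronglyMeasurable
    (Filter.Eventually.of_forall fun M t _ ↦ hC _ ⟨_, rfl⟩) (integrable_const C)
    (Filter.Eventually.of_forall fun M t _ ↦ h.hasDerivAt_expUnitary_mul X M t)).2
  simp only [integral_mul_left_eq_self G, expUnitary_zero, one_mul] at hdiff
  exact hdiff.unique (hasDerivAt_const _ _)

open scoped ComplexStarModule in
lemma HasContinuousGradient.integral_trace_mul_eq_zero (h : HasContinuousGradient G H)
    (A : Matrix ι ι ℂ) : ∫ M, trace (A * H M) ∂μ = 0 := by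
  have hH := h.continuous_gradient
  have hselfAdjoint (S : selfAdjoint (Matrix ι ι ℂ)) : ∫ M, trace (S.1 * H M) ∂μ = 0 := by
    have hskew := h.integral_trace_skewAdjoint_mul_eq_zero (μ := μ)
      ⟨Complex.I • S.1, S.2.smul_mem_skewAdjoint Complex.conj_I⟩
    simpa [Matrix.smul_mul, trace_smul, integral_const_mul] using hskew
  have hint (S : Matrix ι ι ℂ) : Integrable (fun M ↦ trace (S * H M)) μ :=
    integrable_of_continuous (by fun_prop)
  rw [← realPart_add_I_smul_imaginaryPart A]
  simp only [Matrix.add_mul, Matrix.smul_mul, trace_add, trace_smul, smul_eq_mul]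
  rw [integral_add (hint _) ((hint _).const_mul _), integral_const_mul, hselfAdjoint, hselfAdjoint,
    mul_zero, add_zero]

theorem HasContinuousGradient.integral_apply_eq_zero (h : HasContinuousGradient G H) (a b : ι) :
    ∫ M, H M a b ∂μ = 0 := by
  simpa [trace_single_mul] using h.integral_trace_mul_eq_zero (μ := μ) (single b a 1)

end IntegrationByParts

section LoopEquation

variable {ι : Type*} [Fintype ι] [DecidableEq ι] {G : unitaryGroup ι ℂ → ℂ}
  {H : unitaryGroup ι ℂ → Matrix ι ι ℂ}

/-- The sum of `p_i * p_{k-i}` over `0 < i < k`. -/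
noncomputable def splitSum (k : ℕ) (M : unitaryGroup ι ℂ) : ℂ :=
  ∑ i ∈ Finset.Ico 1 k, powTrace i M * powTrace (k - i) M

@[fun_prop]
lemma continuous_splitSum (k : ℕ) : Continuous (splitSum k : unitaryGroup ι ℂ → ℂ) := by
  unfold splitSum
  fun_prop

lemma sum_range_powTrace_mul_powTrace {k : ℕ} (hk : 0 < k) (M : unitaryGroup ι ℂ) :
    ∑ i ∈ Finset.range k, powTrace (i + 1) M * powTrace (k - 1 - i) M =
      Fintype.card ι * powTrace k M + splitSum k M := by
  have hreindex := Finset.sum_Ico_add' (fun i ↦ powTrace i M * powTrace (k - i) M) 0 k 1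
  simp only [Nat.Ico_zero_eq_range, zero_add, Nat.sub_add_eq, Nat.sub_right_comm _ _ 1] at hreindex
  rw [hreindex, Finset.sum_Ico_succ_top hk, Nat.sub_self, powTrace_zero, splitSum]
  ring

lemma mul_single_mul_apply {l m n o : Type*} [Fintype m] [Fintype n] [DecidableEq m] [DecidableEq n]
    (A : Matrix l m ℂ) (B : Matrix n o ℂ) (i : l) (a : m) (b : n) (j : o) :
    (A * single a b (1 : ℂ) * B : Matrix l o ℂ) i j = A i a * B b j := by
  rw [single_eq_single_vecMulVec_single, mul_vecMulVec, vecMulVec_mul, vecMulVec_apply]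
  simp

lemma sum_sum_gradient_pow_apply_mul {k : ℕ} (hk : 0 < k) (M : unitaryGroup ι ℂ) (z : ℂ)
    (Y : Matrix ι ι ℂ) :
    ∑ a, ∑ b, (z • (∑ i ∈ Finset.range k, M.1 ^ (i + 1) * single b a 1 * M.1 ^ (k - 1 - i)) +
      (M.1 ^ k) a b • Y) b a =
      Fintype.card ι * (powTrace k M * z) + splitSum k M * z + trace (M.1 ^ k * Y) := by
  have hprod (i : ℕ) : ∑ a, ∑ b, (M.1 ^ (i + 1)) b b * (M.1 ^ (k - 1 - i)) a a =
      powTrace (i + 1) M * powTrace (k - 1 - i) M := by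
    rw [Finset.sum_comm]
    exact (Finset.sum_mul_sum _ _ _ _).symm
  have hsplit : ∑ a, ∑ b, ∑ i ∈ Finset.range k, (M.1 ^ (i + 1)) b b * (M.1 ^ (k - 1 - i)) a a =
      Fintype.card ι * powTrace k M + splitSum k M := by
    rw [← sum_range_powTrace_mul_powTrace hk, ← Finset.sum_congr rfl fun i _ ↦ hprod i,
      Finset.sum_comm_cycle]
  have htrace : trace (M.1 ^ k * Y) = ∑ a, ∑ b, (M.1 ^ k) a b * Y b a := rfl
  simp only [Matrix.add_apply, Matrix.smul_apply, Matrix.sum_apply, mul_single_mul_apply,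
    smul_eq_mul, Finset.sum_add_distrib, ← Finset.mul_sum, hsplit, htrace]
  ring

variable {μ : Measure (unitaryGroup ι ℂ)} [IsFiniteMeasure μ] [μ.IsMulLeftInvariant]

theorem HasContinuousGradient.loop_equation (h : HasContinuousGradient G H) {k : ℕ} (hk : 0 < k) :
    Fintype.card ι * ∫ M, powTrace k M * G M ∂μ + ∫ M, splitSum k M * G M ∂μ +
      ∫ M, trace (M.1 ^ k * H M) ∂μ = 0 := by
  have hG := h.continuous
  have hH := h.continuous_gradient
  have hentry (a b : ι) := ((HasContinuousGradient.pow_apply k a b).mul h)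
  simp_rw [← integral_const_mul]
  rw [← integral_add (integrable_of_continuous (by fun_prop))
    (integrable_of_continuous (by fun_prop)), ← integral_add
    (integrable_of_continuous (by fun_prop)) (integrable_of_continuous (by fun_prop))]
  simp_rw [← sum_sum_gradient_pow_apply_mul hk]
  rw [integral_finsetSum _ fun a _ ↦ integrable_of_continuous (by fun_prop)]
  refine Finset.sum_eq_zero fun a _ ↦ ?_
  rw [integral_finsetSum _ fun b _ ↦ integrable_of_continuous (by fun_prop)]
  exact Finset.sum_eq_zero fun b _ ↦ (hentry a b).integral_apply_eq_zero b a

end LoopEquation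

section PowTraceProd

variable {ι : Type*} [Fintype ι] [DecidableEq ι]

/-- The power sum symmetric function `p_s = ∏ p_m` of the eigenvalues, the product being over the
parts `m` of `s`. -/
noncomputable def powTraceProd (s : Multiset ℕ) (M : unitaryGroup ι ℂ) : ℂ :=
  (s.map fun m ↦ powTrace m M).prod

lemma powTraceProd_zero (M : unitaryGroup ι ℂ) : powTraceProd 0 M = 1 := by
  simp [powTraceProd]

lemma powTraceProd_cons (m : ℕ) (s : Multiset ℕ) (M : unitaryGroup ι ℂ) :
    powTraceProd (m ::ₘ s) M = powTrace m M * powTraceProd s M := by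
  simp [powTraceProd]

lemma hasContinuousGradient_powTraceProd (s : Multiset ℕ) :
    HasContinuousGradient (powTraceProd s : unitaryGroup ι ℂ → ℂ)
      (fun M ↦ (s.map fun m ↦ (m * powTraceProd (s.erase m) M) • M.1 ^ m).sum) := by
  induction s using Multiset.induction_on with
  | empty => exact HasContinuousGradient.const 1
  | cons a s ih =>
    convert! (hasContinuousGradient_powTrace a).mul ih using 1
    · funext M
      exact powTraceProd_cons a s M
    · funext M
      have herase (m : ℕ) (hm : m ∈ s) : powTraceProd ((a ::ₘ s).erase m) M =
          powTrace a M * powTraceProd (s.erase m) M := by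
        rw [Multiset.erase_cons_tail_of_mem hm, powTraceProd_cons]
      have hterm (m : ℕ) (hm : m ∈ s) : (m * powTraceProd ((a ::ₘ s).erase m) M) • M.1 ^ m =
          powTrace a M • (m * powTraceProd (s.erase m) M) • M.1 ^ m := by
        rw [herase m hm, smul_smul, mul_left_comm]
      rw [Multiset.map_cons, Multiset.sum_cons, Multiset.erase_cons_head,
        Multiset.map_congr rfl hterm, Multiset.smul_sum, Multiset.map_map, smul_smul, mul_comm]
      rfl

@[fun_prop]
lemma continuous_powTraceProd (s : Multiset ℕ) :
    Continuous (powTraceProd s : unitaryGroup ι ℂ → ℂ) :=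
  (hasContinuousGradient_powTraceProd s).continuous

lemma trace_pow_mul_star_pow_of_le (M : unitaryGroup ι ℂ) {c k : ℕ} (h : c ≤ k) :
    trace (M.1 ^ c * star (M.1 ^ k)) = star (powTrace (k - c) M) := by
  have hunit : M.1 ^ c * star (M.1 ^ c) = 1 := Unitary.mul_star_self_of_mem (pow_mem M.2 c)
  rw [← Nat.sub_add_cancel h, pow_add, star_mul, ← mul_assoc, hunit, one_mul, Nat.add_sub_cancel]
  exact trace_conjTranspose _

lemma trace_pow_mul_star_pow_of_ge (M : unitaryGroup ι ℂ) {c k : ℕ} (h : k ≤ c) :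
    trace (M.1 ^ c * star (M.1 ^ k)) = powTrace (c - k) M := by
  rw [← star_star (powTrace (c - k) M), ← trace_pow_mul_star_pow_of_le M h, ← trace_conjTranspose,
    ← star_eq_conjTranspose, star_mul, star_star]

end PowTraceProd

section MixedMoment

lemma integral_multiset_sum_map {α κ E : Type*} [MeasurableSpace α] {μ : Measure α}
    [NormedAddCommGroup E] [NormedSpace ℝ E] {s : Multiset κ} {F : κ → α → E}
    (hF : ∀ a ∈ s, Integrable (F a) μ) :
    Integrable (fun x ↦ (s.map fun a ↦ F a x).sum) μ ∧
      ∫ x, (s.map fun a ↦ F a x).sum ∂μ = (s.map fun a ↦ ∫ x, F a x ∂μ).sum := by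
  induction s using Multiset.induction_on with
  | empty => simp
  | cons a s ih =>
    obtain ⟨hint, heq⟩ := ih fun b hb ↦ hF b (Multiset.mem_cons_of_mem hb)
    have ha := hF a (Multiset.mem_cons_self a s)
    simp only [Multiset.map_cons, Multiset.sum_cons]
    exact ⟨ha.add hint, by rw [integral_add ha hint, heq]⟩

variable {ι : Type*} [Fintype ι] [DecidableEq ι] {μ : Measure (unitaryGroup ι ℂ)}

/-- The mixed moment `E[p_s * conj p_k]`. -/
noncomputable def mixedMoment (μ : Measure (unitaryGroup ι ℂ)) (s : Multiset ℕ) (k : ℕ) : ℂ :=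
  ∫ M, powTraceProd s M * star (powTrace k M) ∂μ

lemma trace_pow_mul_gradient (s : Multiset ℕ) {c k : ℕ} (hck : c ≤ k) (M : unitaryGroup ι ℂ) :
    trace (M.1 ^ c * (star (powTrace k M) •
      (s.map fun m ↦ (m * powTraceProd (s.erase m) M) • M.1 ^ m).sum +
        powTraceProd s M • -star ((k : ℂ) • M.1 ^ k))) =
      (s.map fun m : ℕ ↦ (m : ℂ) *
        (powTraceProd ((c + m) ::ₘ s.erase m) M * star (powTrace k M))).sum -
      k * (powTraceProd s M * star (powTrace (k - c) M)) := by
  have hsum : trace (M.1 ^ c * (s.map fun m ↦ (m * powTraceProd (s.erase m) M) • M.1 ^ m).sum) =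
      (s.map fun m ↦ m * powTraceProd ((c + m) ::ₘ s.erase m) M).sum := by
    rw [← Multiset.sum_map_mul_left, ← traceAddMonoidHom_apply, map_multiset_sum, Multiset.map_map]
    refine congrArg Multiset.sum (Multiset.map_congr rfl fun m _ ↦ ?_)
    simp only [Function.comp_apply, traceAddMonoidHom_apply, Matrix.mul_smul, trace_smul, ← pow_add,
      powTraceProd_cons, smul_eq_mul]
    rw [powTrace]
    ring
  have hstar : star ((k : ℂ) • M.1 ^ k) = (k : ℂ) • star (M.1 ^ k) := by simp [star_smul]
  rw [Matrix.mul_add, trace_add, Matrix.mul_smul, Matrix.mul_smul, trace_smul, trace_smul, hsum,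
    hstar, Matrix.mul_neg, trace_neg, Matrix.mul_smul, trace_smul,
    trace_pow_mul_star_pow_of_le M hck]
  simp only [smul_eq_mul, ← mul_assoc, Multiset.sum_map_mul_right]
  ring

variable [IsFiniteMeasure μ] [μ.IsMulLeftInvariant]

theorem card_mul_mixedMoment_cons (s : Multiset ℕ) {c k : ℕ} (hc : 0 < c) (hck : c ≤ k) :
    Fintype.card ι * mixedMoment μ (c ::ₘ s) k +
      ∑ i ∈ Finset.Ico 1 c, mixedMoment μ (i ::ₘ (c - i) ::ₘ s) k +
        (s.map fun m : ℕ ↦ (m : ℂ) * mixedMoment μ ((c + m) ::ₘ s.erase m) k).sum =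
      k * mixedMoment μ s (k - c) := by
  have hloop := ((hasContinuousGradient_powTraceProd s).mul
    (hasContinuousGradient_powTrace k).conj).loop_equation (μ := μ) hc
  have hcut (M : unitaryGroup ι ℂ) : splitSum c M * (powTraceProd s M * star (powTrace k M)) =
      ∑ i ∈ Finset.Ico 1 c, powTraceProd (i ::ₘ (c - i) ::ₘ s) M * star (powTrace k M) := by
    simp only [splitSum, Finset.sum_mul, powTraceProd_cons, mul_assoc]
  obtain ⟨hjoin_int, hjoin⟩ := integral_multiset_sum_map (μ := μ) (s := s)
    (F := fun m (M : unitaryGroup ι ℂ) ↦ (m : ℂ) *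
      (powTraceProd ((c + m) ::ₘ s.erase m) M * star (powTrace k M)))
    fun m _ ↦ integrable_of_continuous (by fun_prop)
  simp_rw [trace_pow_mul_gradient s hck, hcut] at hloop
  rw [integral_sub hjoin_int (integrable_of_continuous (by fun_prop)), hjoin,
    integral_finsetSum _ fun i _ ↦ integrable_of_continuous (by fun_prop)] at hloop
  simp only [integral_const_mul] at hloop
  simp only [mixedMoment, powTraceProd_cons, mul_assoc] at hloop ⊢
  linear_combination hloop

end MixedMoment

section Combinatorics

variable {E : Type*} [NormedAddCommGroup E] [NormedSpace ℝ E] {e : Multiset ℕ → E}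

lemma norm_cut_add_join_le {c : ℕ} (hc : 0 < c) {s : Multiset ℕ} (hs : ∀ m ∈ s, 0 < m) {D : ℝ}
    (hD : ∀ t : Multiset ℕ, (∀ m ∈ t, 0 < m) → t.sum = c + s.sum → ‖e t‖ ≤ D) :
    ‖∑ i ∈ Finset.Ico 1 c, e (i ::ₘ (c - i) ::ₘ s) +
      (s.map fun m ↦ m • e ((c + m) ::ₘ s.erase m)).sum‖ ≤ ((c + s.sum : ℕ) - 1) * D := by
  have hcut : ‖∑ i ∈ Finset.Ico 1 c, e (i ::ₘ (c - i) ::ₘ s)‖ ≤ (c - 1) * D := by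
    refine (norm_sum_le_of_le _ fun i hi ↦ hD _ ?_ ?_).trans_eq ?_
    · grind
    · grind [Multiset.sum_cons]
    · simp [Nat.cast_sub hc]
  have hjoin : ‖(s.map fun m ↦ m • e ((c + m) ::ₘ s.erase m)).sum‖ ≤ s.sum * D := by
    refine (norm_multiset_sum_le _).trans ?_
    rw [Multiset.map_map, Nat.cast_multiset_sum, ← Multiset.sum_map_mul_right]
    refine Multiset.sum_map_le_sum_map _ _ fun m hm ↦ ?_
    have hpos : ∀ i ∈ (c + m) ::ₘ s.erase m, 0 < i := by
      have herase : ∀ i ∈ s.erase m, 0 < i := fun i hi ↦ hs i (Multiset.mem_of_mem_erase hi)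
      grind
    have hsum : ((c + m) ::ₘ s.erase m).sum = c + s.sum := by
      rw [Multiset.sum_cons, add_assoc, Multiset.sum_erase hm]
    rw [Function.comp_apply, RCLike.norm_nsmul ℝ, nsmul_eq_mul]
    exact mul_le_mul_of_nonneg_left (hD _ hpos hsum) m.cast_nonneg
  calc _ ≤ (c - 1) * D + s.sum * D := norm_add_le_of_le hcut hjoin
    _ = _ := by push_cast; ring

lemma eq_zero_of_homogeneous_loop_equation {n k : ℕ} (hk : 0 < k) (hkn : k ≤ n)
    (h : ∀ (c : ℕ) (s : Multiset ℕ), 0 < c → (∀ m ∈ s, 0 < m) → c + s.sum = k →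
      n • e (c ::ₘ s) + ∑ i ∈ Finset.Ico 1 c, e (i ::ₘ (c - i) ::ₘ s) +
        (s.map fun m ↦ m • e ((c + m) ::ₘ s.erase m)).sum = 0)
    (p : Nat.Partition k) : e p.parts = 0 := by
  -- At a maximum of `‖e‖` the cut and join terms have total weight `k - 1 < n`.
  obtain ⟨q, hq⟩ := Finite.exists_max fun q : Nat.Partition k ↦ ‖e q.parts‖
  obtain ⟨c, hc⟩ : ∃ c, c ∈ q.parts := by
    refine Multiset.exists_mem_of_ne_zero fun h₀ ↦ hk.ne ?_
    rw [← q.parts_sum, h₀, Multiset.sum_zero]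
  obtain ⟨s, hs⟩ := Multiset.exists_cons_of_mem hc
  have hs_pos : ∀ m ∈ s, 0 < m := fun m hm ↦ q.parts_pos (hs ▸ Multiset.mem_cons_of_mem hm)
  have hsum : c + s.sum = k := by rw [← Multiset.sum_cons, ← hs, q.parts_sum]
  have hle : n * ‖e q.parts‖ ≤ (k - 1) * ‖e q.parts‖ := by
    have hloop := eq_neg_of_add_eq_zero_left
      ((add_assoc _ _ _).symm.trans (h c s (q.parts_pos hc) hs_pos hsum))
    have hbound := norm_cut_add_join_le (q.parts_pos hc) hs_pos
      fun t ht ht_sum ↦ hq ⟨t, fun hm ↦ ht _ hm, ht_sum.trans hsum⟩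
    rwa [← norm_neg, ← hloop, ← hs, hsum, RCLike.norm_nsmul ℝ, nsmul_eq_mul] at hbound
  have hkn' : (k : ℝ) ≤ n := Nat.cast_le.2 hkn
  have hzero : ‖e q.parts‖ = 0 := by nlinarith [norm_nonneg (e q.parts)]
  exact norm_le_zero_iff.1 ((hq p).trans_eq hzero)

end Combinatorics

section GaussianMoments

/-- The value of `mixedMoment μ s k` when `s` is a partition of `k ≤ n`: it is the one obtained by
replacing the power sums `p_m` by independent complex Gaussians of variance `m`. -/
def gaussianMixedMoment (s : Multiset ℕ) (k : ℕ) : ℕ := if s = {k} then k else 0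

lemma gaussianMixedMoment_cons (c : ℕ) (s : Multiset ℕ) (k : ℕ) :
    gaussianMixedMoment (c ::ₘ s) k = if c = k ∧ s = 0 then k else 0 := by
  simp only [gaussianMixedMoment, eq_comm (b := ({k} : Multiset ℕ)), Multiset.singleton_eq_cons_iff,
    eq_comm (a := k)]

lemma sum_gaussianMixedMoment_join {c : ℕ} {s : Multiset ℕ} (hs : s ≠ 0) :
    (s.map fun m ↦ m * gaussianMixedMoment ((c + m) ::ₘ s.erase m) (c + s.sum)).sum =
      (c + s.sum) * gaussianMixedMoment s s.sum := by
  obtain ⟨m, hm⟩ := Multiset.exists_mem_of_ne_zero hs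
  obtain ⟨t, rfl⟩ := Multiset.exists_cons_of_mem hm
  obtain rfl | ht := eq_or_ne t 0
  · simp [gaussianMixedMoment, mul_comm]
  · have herase : ∀ i ∈ m ::ₘ t, (m ::ₘ t).erase i ≠ 0 := by
      intro i hi h
      have hcard := Multiset.card_erase_add_one hi
      rw [h, Multiset.card_zero, Multiset.card_cons, add_left_inj] at hcard
      exact ht (Multiset.card_eq_zero.1 hcard.symm)
    have hterm : ∀ i ∈ m ::ₘ t, i * gaussianMixedMoment ((c + i) ::ₘ (m ::ₘ t).erase i)
        (c + (m ::ₘ t).sum) = 0 := fun i hi ↦ by simp [gaussianMixedMoment_cons, herase i hi]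
    rw [Multiset.map_congr rfl hterm]
    simp [gaussianMixedMoment_cons, ht]

variable {ι : Type*} [Fintype ι] [DecidableEq ι] {μ : Measure (unitaryGroup ι ℂ)}
  [IsProbabilityMeasure μ] [μ.IsMulLeftInvariant]

theorem mixedMoment_eq_gaussianMixedMoment {k : ℕ} (hk : 0 < k) (hkn : k ≤ Fintype.card ι)
    (p : Nat.Partition k) : mixedMoment μ p.parts k = gaussianMixedMoment p.parts k := by
  induction k using Nat.strong_induction_on with
  | h k ih =>
  refine sub_eq_zero.1 (eq_zero_of_homogeneous_loop_equation
    (e := fun s ↦ mixedMoment μ s k - gaussianMixedMoment s k) hk hkn ?_ p)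
  rintro c s hc hs rfl
  have hloop := card_mul_mixedMoment_cons (μ := μ) s hc (Nat.le_add_right c s.sum)
  have hcut (i : ℕ) : gaussianMixedMoment (i ::ₘ (c - i) ::ₘ s) (c + s.sum) = 0 := by
    simp [gaussianMixedMoment_cons]
  rw [Nat.add_sub_cancel_left] at hloop
  simp only [smul_sub, Finset.sum_sub_distrib, Multiset.sum_map_sub, hcut, nsmul_eq_mul,
    Nat.cast_zero, Finset.sum_const_zero]
  obtain rfl | hs₀ := eq_or_ne s 0
  · have hempty : mixedMoment μ 0 0 = Fintype.card ι := by
      simp [mixedMoment, powTraceProd_zero, powTrace_zero]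
    simp only [Multiset.map_zero, Multiset.sum_zero, hempty, add_zero] at hloop ⊢
    simp only [gaussianMixedMoment_cons, and_self, if_true]
    linear_combination hloop
  · obtain ⟨m, hm⟩ := Multiset.exists_mem_of_ne_zero hs₀
    have hsum : 0 < s.sum := (hs m hm).trans_le (Multiset.le_sum_of_mem hm)
    have hjoin := congrArg (Nat.cast : ℕ → ℂ) (sum_gaussianMixedMoment_join (c := c) hs₀)
    have hih : mixedMoment μ s s.sum = gaussianMixedMoment s s.sum :=
      ih s.sum (by omega) hsum (by omega) ⟨s, fun hm ↦ hs _ hm, rfl⟩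
    rw [hih] at hloop
    simp only [gaussianMixedMoment_cons c, hs₀, and_false, if_false]
    simp only [Nat.cast_multiset_sum, Multiset.map_map, Function.comp_def, Nat.cast_mul] at hjoin
    linear_combination hloop - hjoin

end GaussianMoments

section SecondMoments

lemma integral_norm_le_sqrt {α : Type*} [MeasurableSpace α] {μ : Measure α} [IsProbabilityMeasure μ]
    {F : α → ℂ} (hF : MemLp F 2 μ) {r : ℝ} (h : ∫ x, F x * star (F x) ∂μ = r) :
    ∫ x, ‖F x‖ ∂μ ≤ √r := by
  have hsq (x : α) : F x * star (F x) = ((‖F x‖ ^ 2 : ℝ) : ℂ) := by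
    rw [Complex.star_def, Complex.mul_conj, Complex.normSq_eq_norm_sq]
  simp_rw [hsq] at h
  rw [integral_complex_ofReal, Complex.ofReal_inj] at h
  rw [← h]
  exact Real.le_sqrt_of_sq_le <| even_two.convexOn_pow.map_integral_le
    (continuous_pow 2).continuousOn isClosed_univ (.of_forall fun _ ↦ Set.mem_univ _)
    (hF.integrable one_le_two).norm (hF.integrable_norm_pow two_ne_zero)

variable {ι : Type*} [Fintype ι] [DecidableEq ι] {μ : Measure (unitaryGroup ι ℂ)}
  [IsProbabilityMeasure μ] [μ.IsMulLeftInvariant]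

theorem integral_powTrace_mul_star {k : ℕ} (hk : 0 < k) (hkn : k ≤ Fintype.card ι) :
    ∫ M, powTrace k M * star (powTrace k M) ∂μ = k := by
  have h := mixedMoment_eq_gaussianMixedMoment (μ := μ) hk hkn
    ⟨{k}, by simp [hk], Multiset.sum_singleton k⟩
  simpa [mixedMoment, powTraceProd, gaussianMixedMoment] using h

theorem integral_powTrace_add_mul_star_mul {a b : ℕ} (ha : 0 < a) (hb : 0 < b)
    (hab : a + b ≤ Fintype.card ι) :
    ∫ M, powTrace (a + b) M * star (powTrace a M * powTrace b M) ∂μ = 0 := by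
  have h : mixedMoment μ (a ::ₘ {b}) (a + b) = gaussianMixedMoment (a ::ₘ {b}) (a + b) :=
    mixedMoment_eq_gaussianMixedMoment (Nat.add_pos_left ha b) hab
      ⟨a ::ₘ {b}, by simp [ha, hb], by simp⟩
  rw [mixedMoment, gaussianMixedMoment_cons] at h
  simp only [powTraceProd, Multiset.map_cons, Multiset.map_singleton, Multiset.prod_cons,
    Multiset.prod_singleton, Multiset.singleton_ne_zero, and_false, if_false, Nat.cast_zero] at h
  have hconj := congrArg (starRingEnd ℂ) h
  rw [← integral_conj, map_zero] at hconj
  rw [← hconj]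
  refine integral_congr_ae (.of_forall fun M ↦ ?_)
  simp [mul_comm]

lemma trace_pow_mul_gradient_conj_mul (a b : ℕ) (M : unitaryGroup ι ℂ) :
    trace (M.1 ^ (a + b) * (star (powTrace b M) • -star ((a : ℂ) • M.1 ^ a) +
      star (powTrace a M) • -star ((b : ℂ) • M.1 ^ b))) =
      -(a * (powTrace b M * star (powTrace b M)) + b * (powTrace a M * star (powTrace a M))) := by
  have ha := trace_pow_mul_star_pow_of_ge M (Nat.le_add_right a b)
  have hb := trace_pow_mul_star_pow_of_ge M (Nat.le_add_left b a)
  rw [Nat.add_sub_cancel_left] at ha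
  rw [Nat.add_sub_cancel] at hb
  simp only [star_smul, star_natCast, Matrix.mul_add, Matrix.mul_smul, Matrix.mul_neg, trace_add,
    trace_smul, trace_neg, smul_eq_mul, ha, hb]
  ring

theorem integral_splitSum_mul_star_mul {a b : ℕ} (ha : 0 < a) (hb : 0 < b)
    (hab : a + b ≤ Fintype.card ι) :
    ∫ M, splitSum (a + b) M * star (powTrace a M * powTrace b M) ∂μ = 2 * a * b := by
  have hloop := ((hasContinuousGradient_powTrace a).conj.mul
    (hasContinuousGradient_powTrace b).conj).loop_equation (μ := μ) (Nat.add_pos_left ha b)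
  simp_rw [trace_pow_mul_gradient_conj_mul] at hloop
  rw [integral_neg, integral_add (integrable_of_continuous (by fun_prop))
    (integrable_of_continuous (by fun_prop)), integral_const_mul, integral_const_mul,
    integral_powTrace_mul_star ha (by omega), integral_powTrace_mul_star hb (by omega)] at hloop
  have hzero := integral_powTrace_add_mul_star_mul (μ := μ) ha hb hab
  simp only [star_mul'] at hzero ⊢
  rw [hzero] at hloop
  linear_combination hloop

theorem integral_splitSum_mul_star {k : ℕ} (hkn : k ≤ Fintype.card ι) :
    ∫ M, splitSum k M * star (splitSum k M) ∂μ =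
      ∑ i ∈ Finset.Ico 1 k, (2 * i * (k - i : ℕ) : ℂ) := by
  have hexpand (M : unitaryGroup ι ℂ) : splitSum k M * star (splitSum k M) =
      ∑ i ∈ Finset.Ico 1 k, splitSum k M * star (powTrace i M * powTrace (k - i) M) := by
    rw [← Finset.mul_sum, ← star_sum, ← splitSum]
  simp_rw [hexpand]
  rw [integral_finsetSum _ fun i _ ↦ integrable_of_continuous (by fun_prop)]
  refine Finset.sum_congr rfl fun i hi ↦ ?_
  obtain ⟨hi_pos, hik⟩ := Finset.mem_Ico.1 hi
  have hadd : i + (k - i) = k := Nat.add_sub_cancel' hik.le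
  have h := integral_splitSum_mul_star_mul (μ := μ) hi_pos (Nat.sub_pos_of_lt hik)
    (hadd.trans_le hkn)
  rwa [hadd] at h

theorem integral_norm_powTrace_le {k : ℕ} (hk : 0 < k) (hkn : k ≤ Fintype.card ι) :
    ∫ M, ‖powTrace k M‖ ∂μ ≤ √k :=
  integral_norm_le_sqrt ((continuous_powTrace k).memLp_of_hasCompactSupport (.of_compactSpace _))
    ((integral_powTrace_mul_star hk hkn).trans (Complex.ofReal_natCast k).symm)

lemma sum_Ico_two_mul_mul_sub_le (k : ℕ) :
    ∑ i ∈ Finset.Ico 1 k, (2 * i * (k - i : ℕ) : ℝ) ≤ k * (k ^ 2 / 2) := by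
  have hterm : ∀ i ∈ Finset.Ico 1 k, (2 * i * (k - i : ℕ) : ℝ) ≤ k ^ 2 / 2 := by
    intro i hi
    rw [Nat.cast_sub (Finset.mem_Ico.1 hi).2.le]
    nlinarith [sq_nonneg (2 * (i : ℝ) - k)]
  refine (Finset.sum_le_card_nsmul _ _ _ hterm).trans ?_
  rw [Nat.card_Ico, nsmul_eq_mul]
  gcongr
  exact Nat.sub_le k 1

theorem integral_norm_splitSum_le {k : ℕ} (hkn : k ≤ Fintype.card ι) :
    ∫ M, ‖splitSum k M‖ ∂μ ≤ k * √(2 * k) / 2 := by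
  have hsq : (∑ i ∈ Finset.Ico 1 k, (2 * i * (k - i : ℕ) : ℝ)) ≤ (k * √(2 * k) / 2) ^ 2 := by
    refine (sum_Ico_two_mul_mul_sub_le k).trans_eq ?_
    rw [div_pow, mul_pow, Real.sq_sqrt (by positivity)]
    ring
  have hL2 : MemLp (splitSum k) 2 μ :=
    (continuous_splitSum k).memLp_of_hasCompactSupport (.of_compactSpace _)
  refine (integral_norm_le_sqrt hL2 ?_).trans (Real.sqrt_le_iff.2 ⟨by positivity, hsq⟩)
  rw [integral_splitSum_mul_star hkn]
  push_cast
  rfl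

end SecondMoments

section SteinIdentity

variable {ι : Type*} [Fintype ι] [DecidableEq ι]

/-- The real random variable `W = (p_j + conj p_j) / √(2j)`, written as `2 Re(p_j) / √(2j)`. -/
noncomputable def normalizedPowTrace (j : ℕ) (M : unitaryGroup ι ℂ) : ℝ :=
  2 * (powTrace j M).re / √(2 * j)

@[fun_prop]
lemma continuous_normalizedPowTrace (j : ℕ) :
    Continuous (normalizedPowTrace j : unitaryGroup ι ℂ → ℝ) := by
  unfold normalizedPowTrace
  fun_prop

lemma trU_add_conj_re_div_sqrt {n : ℕ} (j : ℕ) (M : unitaryGroup (Fin n) ℂ) :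
    (trU M j + (starRingEnd ℂ) (trU M j)).re / √(2 * j) = normalizedPowTrace j M := by
  rw [Complex.add_conj, Complex.ofReal_re, trU, zpow_natCast, SubmonoidClass.coe_pow]
  rfl

lemma trace_pow_mul_sub_star (j : ℕ) (M : unitaryGroup ι ℂ) :
    trace (M.1 ^ j * ((j : ℂ) • M.1 ^ j - star ((j : ℂ) • M.1 ^ j))) =
      j * (powTrace (2 * j) M - Fintype.card ι) := by
  have hstar := trace_pow_mul_star_pow_of_ge M (le_refl j)
  rw [Nat.sub_self, powTrace_zero] at hstar
  rw [star_smul, star_natCast, ← smul_sub, Matrix.mul_smul, trace_smul, Matrix.mul_sub, trace_sub,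
    hstar, ← pow_add, ← two_mul, powTrace, smul_eq_mul]

lemma mul_re_loop_integrand {c : ℝ} {j : ℕ} (hc : c ^ 2 * j = 2) (n : ℕ) (p q s : ℂ) (y y' : ℝ) :
    c * (n * (p * y) + s * y + ((y' * c : ℝ) / 2 : ℂ) • (j * (q - n))).re =
      y' * q.re + c * (y * s.re) - n * (y' - c * p.re * y) := by
  simp only [Complex.ofReal_mul, smul_eq_mul, Complex.add_re, Complex.mul_re, Complex.natCast_re,
    Complex.ofReal_re, Complex.ofReal_im, mul_zero, sub_zero, Complex.natCast_im, Complex.mul_im,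
    zero_add, zero_mul, Complex.div_ofNat_re, Complex.sub_re, Complex.sub_im, Complex.div_ofNat_im,
    add_zero, zero_div]
  linear_combination (y' * (q.re - n) / 2) * hc

variable {μ : Measure (unitaryGroup ι ℂ)} [IsFiniteMeasure μ] [μ.IsMulLeftInvariant]
  {f f' : ℝ → ℝ} {j : ℕ}

theorem card_mul_integral_deriv_sub_mul_normalizedPowTrace (hj : 0 < j) (hf' : Continuous f')
    (hf : ∀ x, HasDerivAt f (f' x) x) :
    Fintype.card ι * ∫ M, (f' (normalizedPowTrace j M) -
        normalizedPowTrace j M * f (normalizedPowTrace j M)) ∂μ =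
      ∫ M, f' (normalizedPowTrace j M) * (powTrace (2 * j) M).re ∂μ +
        2 / √(2 * j) * ∫ M, f (normalizedPowTrace j M) * (splitSum j M).re ∂μ := by
  have hf_cont : Continuous f := continuous_iff_continuousAt.2 fun x ↦ (hf x).continuousAt
  set c : ℝ := 2 / √(2 * j) with hc
  have hc_sq : c ^ 2 * j = 2 := by
    rw [hc, div_pow, Real.sq_sqrt (by positivity)]
    field_simp
  have hW (M : unitaryGroup ι ℂ) : c * (powTrace j M).re = normalizedPowTrace j M :=
    div_mul_eq_mul_div _ _ _
  have hscaled (x : ℝ) : HasDerivAt (fun y ↦ f (c * y)) (f' (c * x) * c) x :=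
    (hf (c * x)).comp x (by simpa using (hasDerivAt_id x).const_mul c)
  have hloop := ((hasContinuousGradient_powTrace j).comp_re (by fun_prop) hscaled).loop_equation
    (μ := μ) hj
  simp only [Matrix.mul_smul, trace_smul, trace_pow_mul_sub_star] at hloop
  rw [← integral_const_mul, ← integral_add (integrable_of_continuous (by fun_prop))
    (integrable_of_continuous (by fun_prop)), ← integral_add
    (integrable_of_continuous (by fun_prop)) (integrable_of_continuous (by fun_prop))] at hloop
  have hre := congrArg (fun z ↦ c * RCLike.re z) hloop
  beta_reduce at hre
  rw [← integral_re (integrable_of_continuous (by fun_prop)), ← integral_const_mul, map_zero,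
    mul_zero] at hre
  simp only [RCLike.re_eq_complex_re, mul_re_loop_integrand hc_sq, hW] at hre
  rw [integral_sub, integral_add, integral_const_mul, integral_const_mul, sub_eq_zero] at hre
  · exact hre.symm
  all_goals exact integrable_of_continuous (by fun_prop)

end SteinIdentity

section SteinBound

lemma abs_integral_mul_re_le {α : Type*} [MeasurableSpace α] {μ : Measure α} {u : α → ℝ}
    {F : α → ℂ} {C : ℝ} (hu : ∀ x, |u x| ≤ C) (hF : Integrable F μ) :
    |∫ x, u x * (F x).re ∂μ| ≤ C * ∫ x, ‖F x‖ ∂μ := by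
  rw [← integral_const_mul, ← Real.norm_eq_abs]
  refine norm_integral_le_of_norm_le (hF.norm.const_mul C) (.of_forall fun x ↦ ?_)
  rw [norm_mul]
  exact mul_le_mul (hu x) (Complex.abs_re_le_norm _) (norm_nonneg _) ((abs_nonneg _).trans (hu x))

lemma abs_measureReal_sub_measureReal_le_one {α β : Type*} [MeasurableSpace α] [MeasurableSpace β]
    (μ : Measure α) (ν : Measure β) [IsProbabilityMeasure μ] [IsProbabilityMeasure ν]
    (A : Set α) (B : Set β) : |μ.real A - ν.real B| ≤ 1 := by
  refine abs_sub_le_iff.2 ⟨?_, ?_⟩ <;> linarith [measureReal_nonneg (μ := μ) (s := A),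
    measureReal_nonneg (μ := ν) (s := B), measureReal_le_one (μ := μ) (s := A),
    measureReal_le_one (μ := ν) (s := B)]

lemma sqrt_two_mul_le {j : ℕ} (hj : 0 < j) : √(2 * j) ≤ 3 / 2 * j := by
  have hj_one : (1 : ℝ) ≤ j := by exact_mod_cast hj
  exact Real.sqrt_le_iff.2 ⟨by positivity, by nlinarith⟩

lemma sqrt_two_pi_le_three : √(2 * Real.pi) ≤ 3 :=
  Real.sqrt_le_iff.2 ⟨by norm_num, by linarith [Real.pi_lt_d2]⟩

variable {ι : Type*} [Fintype ι] [DecidableEq ι] {μ : Measure (unitaryGroup ι ℂ)}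
  [IsProbabilityMeasure μ] [μ.IsMulLeftInvariant] {f f' : ℝ → ℝ} {j : ℕ}

theorem card_mul_abs_integral_deriv_sub_mul_normalizedPowTrace_le (hj : 0 < j)
    (hjn : 2 * j ≤ Fintype.card ι) (hf' : Continuous f') (hf : ∀ x, HasDerivAt f (f' x) x)
    (hf_bound : ∀ x, |f x| ≤ √(2 * Real.pi)) (hf'_bound : ∀ x, |f' x| ≤ 2) :
    Fintype.card ι * |∫ M, (f' (normalizedPowTrace j M) -
      normalizedPowTrace j M * f (normalizedPowTrace j M)) ∂μ| ≤ 6 * j := by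
  have hpow : |∫ M, f' (normalizedPowTrace j M) * (powTrace (2 * j) M).re ∂μ| ≤ 2 * √(2 * j) := by
    refine (abs_integral_mul_re_le (fun M ↦ hf'_bound _)
      (integrable_of_continuous (continuous_powTrace _))).trans ?_
    gcongr
    exact_mod_cast integral_norm_powTrace_le (μ := μ) (by omega : 0 < 2 * j) hjn
  have hsplit : |∫ M, f (normalizedPowTrace j M) * (splitSum j M).re ∂μ| ≤
      3 * (j * √(2 * j) / 2) := by
    refine (abs_integral_mul_re_le (fun M ↦ (hf_bound _).trans sqrt_two_pi_le_three)
      (integrable_of_continuous (continuous_splitSum j))).trans ?_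
    gcongr
    exact integral_norm_splitSum_le (by omega)
  calc Fintype.card ι * |∫ M, (f' (normalizedPowTrace j M) -
        normalizedPowTrace j M * f (normalizedPowTrace j M)) ∂μ|
      = |∫ M, f' (normalizedPowTrace j M) * (powTrace (2 * j) M).re ∂μ +
          2 / √(2 * j) * ∫ M, f (normalizedPowTrace j M) * (splitSum j M).re ∂μ| := by
        rw [← card_mul_integral_deriv_sub_mul_normalizedPowTrace hj hf' hf, abs_mul, Nat.abs_cast]
    _ ≤ 2 * √(2 * j) + 2 / √(2 * j) * (3 * (j * √(2 * j) / 2)) := by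
        refine (abs_add_le _ _).trans (add_le_add hpow ?_)
        rw [abs_mul, abs_of_nonneg (by positivity)]
        gcongr
    _ = 2 * √(2 * j) + 3 * j := by field_simp
    _ ≤ 6 * j := by linarith [sqrt_two_mul_le hj]

end SteinBound
end UnitaryTrace

open UnitaryTrace

theorem u_trace_power_clt_general {ι : Type*} [Fintype ι] [DecidableEq ι] [Nonempty ι] {j : ℕ}
    (hj : 0 < j) (μ : Measure (unitaryGroup ι ℂ)) [IsProbabilityMeasure μ]
    [μ.IsMulLeftInvariant] {A : Set ℝ} (hA : MeasurableSet A) :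
    |μ.real {M | normalizedPowTrace j M ∈ A} - (gaussianReal 0 1).real A| ≤
      6 * j / Fintype.card ι := by
  obtain hlarge | hsmall := lt_or_ge (Fintype.card ι) (2 * j)
  · have hlarge' : (Fintype.card ι : ℝ) < 2 * j := by exact_mod_cast hlarge
    exact (abs_measureReal_sub_measureReal_le_one _ _ _ _).trans
      ((one_le_div₀ (by positivity)).2 (by linarith))
  have hW : Continuous (normalizedPowTrace j : unitaryGroup ι ℂ → ℝ) :=
    continuous_normalizedPowTrace j
  have := Measure.isProbabilityMeasure_map (μ := μ) hW.aemeasurable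
  have hmap : μ.real {M | normalizedPowTrace j M ∈ A} = (μ.map (normalizedPowTrace j)).real A :=
    (map_measureReal_apply hW.measurable hA).symm
  rw [hmap]
  refine abs_measureReal_sub_gaussianReal_le_of_stein
    (fun f f' hf' hf hf_bound hf'_bound ↦ ?_) hA
  have hf_cont : Continuous f := continuous_iff_continuousAt.2 fun x ↦ (hf x).continuousAt
  rw [integral_map hW.aemeasurable (by fun_prop), le_div_iff₀' (by positivity)]
  exact card_mul_abs_integral_deriv_sub_mul_normalizedPowTrace_le hj hsmall hf' hf hf_bound
    hf'_bound

/-- CLT with explicit rate `22·j/n` for traces of powers of Haar-distributed elements of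
`U(n,ℂ)`: for all `n, j ≥ 1` and all `x₀`, `|P(W ≤ x₀) − Φ(x₀)| ≤ 22·j/n`, where
`W = (Tr(M^j) + conj(Tr(M^j)))/√(2j)` (a real number, recorded via the real part). -/
theorem u_trace_power_clt (n j : ℕ) (hn : 0 < n) (hj : 0 < j)
    (μ : Measure (Matrix.unitaryGroup (Fin n) ℂ)) [IsProbabilityMeasure μ]
    [μ.IsHaarMeasure] (x₀ : ℝ) :
    |(μ {M : Matrix.unitaryGroup (Fin n) ℂ |
        (trU M j + (starRingEnd ℂ) (trU M j)).re / Real.sqrt (2 * j) ≤ x₀}).toReal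
        - Phi x₀| ≤ 22 * j / n := by
  have : NeZero n := ⟨hn.ne'⟩
  simp_rw [trU_add_conj_re_div_sqrt, Phi_eq_gaussianReal_Iic]
  refine (u_trace_power_clt_general hj μ measurableSet_Iic).trans ?_
  rw [Fintype.card_fin]
  gcongr
  norm_num
end
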